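/- With high probability, every vector (m_1,…,m_q) of nonnegative integers satisfying m_1+⋯+m_q = n and m_i ≥ βn for all i ∈ [q] lies in the perfect matching color profile of G; that is, w.h.p. for every such (m_1,…,m_q) there exists a perfect matching M of G with |M ∩ Q_i| = m_i for every i = 1,…,q. -/

import Mathlib

open MeasureTheory Filter Finset Asymptotics

/-- Discrete measurable structure on edge states: `none` = non-edge, `some i` = edge of color `cᵢ`. -/
instance (q : ℕ) : MeasurableSpace (Option (Fin q)) := ⊤

/-- Distribution of the state of a single pair: non-edge with probability `1-p`,
an edge of color `cᵢ` with probability `αᵢ·p`. -/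
noncomputable def colorM (q : ℕ) (α : Fin q → ℝ) (p : ℝ) : Measure (Option (Fin q)) :=
  ENNReal.ofReal (1 - p) • Measure.dirac none +
    ∑ i : Fin q, ENNReal.ofReal (α i * p) • Measure.dirac (some i)

/-- The randomly colored random bipartite graph on parts `A = B = Fin n`:
independently, each pair `(a,b)` is a non-edge with probability `1-p` and an
edge of color `cᵢ` with probability `αᵢ·p`.  A sample is a function
`f : Fin n × Fin n → Option (Fin q)`. -/
noncomputable def graphM (n q : ℕ) (α : Fin q → ℝ) (p : ℝ) :
    Measure (Fin n × Fin n → Option (Fin q)) :=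
  Measure.pi fun _ => colorM q α p

/-!
Fix a block of about `βn / 2` labelled vertices for each color on both sides, and call a vertex
deficient if, for some color, it has fewer than a small multiple of the expected degree of edges of
that color to the block of that color on the other side. With high probability there are few
deficient vertices, only boundedly many near any given vertex, and Hall's condition gives a perfect
matching `σ`. Keep the edges of `σ` at deficient vertices. Since they are few and the blocks are
small, the remaining vertices of one side can be assigned colors that agree with the labels and make
every color class as large as prescribed. Each remaining vertex still has many edges of its assigned
color into the unmatched vertices or, from the other side, from the vertices assigned that color, so
Hall's condition holds for the edges whose color is the one assigned to their endpoint: small sets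
expand because the graph is locally sparse, and large sets because every color appears between any
two of them. Rematching the remaining vertices gives the prescribed profile.
-/

section Hall

variable {A B ι : Type*} [Fintype A]

lemma card_filter_eq_none_add_sum_card_filter_eq_some [Fintype ι] [DecidableEq ι]
    (g : A → Option ι) :
    #{a | g a = none} + ∑ i, #{a | g a = some i} = Fintype.card A := by
  rw [← Fintype.sum_option fun o => #{a | g a = o}, ← card_univ,
    card_eq_sum_card_fiberwise fun a _ => mem_univ (g a)]

lemma exists_coloring_extending [Fintype ι] [DecidableEq ι] (g : A → Option ι) (m : ι → ℕ)
    (hg : ∀ i, #{a | g a = some i} ≤ m i) (hm : ∑ i, m i = Fintype.card A) :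
    ∃ c : A → ι, (∀ a i, g a = some i → c a = i) ∧ ∀ i, #{a | c a = i} = m i := by
  classical
  have hcard := card_filter_eq_none_add_sum_card_filter_eq_some g
  induction hk : #{a | g a = none} generalizing g with
  | zero =>
    have hsome : ∀ a, ∃ i, g a = some i := by
      simpa [filter_eq_empty_iff, Option.ne_none_iff_exists'] using hk
    choose c hc using hsome
    refine ⟨c, fun a i hai => Option.some_injective _ ((hc a).symm.trans hai), fun i => ?_⟩
    have hfibers := (sum_eq_sum_iff_of_le fun i _ => hg i).1 (by omega) i (mem_univ i)
    simpa [hc] using hfibers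
  | succ k ih =>
    obtain ⟨u, hu⟩ : ({a | g a = none} : Finset A).Nonempty := card_pos.1 (by omega)
    obtain ⟨i, -, hi⟩ : ∃ i ∈ univ, #{a | g a = some i} < m i :=
      exists_lt_of_sum_lt (by omega)
    rw [mem_filter_univ] at hu
    have hfiber (j : ι) : #{a | Function.update g u (some i) a = some j} =
        #{a | g a = some j} + if i = j then 1 else 0 := by
      split_ifs with hij
      · rw [← card_insert_of_notMem (s := {a | g a = some j}) (a := u) (by simp [hu])]
        congr 1; ext a; by_cases ha : a = u <;> simp [ha, hij]
      · congr 1; ext a; by_cases ha : a = u <;> simp [ha, hij, hu]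
    have hcard' := card_filter_eq_none_add_sum_card_filter_eq_some (Function.update g u (some i))
    obtain ⟨c, hc, hcm⟩ := ih (Function.update g u (some i))
      (fun j => by rw [hfiber]; split_ifs with hij <;> [exact hij ▸ hi; exact hg j]) hcard'
      (by simp only [hfiber, sum_add_distrib, sum_ite_eq, mem_univ, if_true] at hcard'; omega)
    refine ⟨c, fun a j haj => hc a j ?_, hcm⟩
    rwa [Function.update_of_ne (by rintro rfl; simp [hu] at haj)]

lemma exists_labelling_card_eq [Fintype ι] [DecidableEq ι] {k : ℕ}
    (hk : Fintype.card ι * k ≤ Fintype.card A) :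
    ∃ lab : A → Option ι, ∀ i, #{v | lab v = some i} = k := by
  obtain ⟨lab, -, hlab⟩ := exists_coloring_extending (fun _ : A => none)
    (fun o : Option ι => o.elim (Fintype.card A - Fintype.card ι * k) fun _ => k) (by simp)
    (by simp [Fintype.sum_option, hk])
  exact ⟨lab, fun i => hlab (some i)⟩

lemma exists_equiv_of_expansion [Fintype B] (r : A → B → Prop)
    (hcard : Fintype.card A = Fintype.card B) (K : ℝ)
    (hleft : ∀ (S : Finset A) (T : Finset B), #S ≤ K → (∀ a ∈ S, ∀ b, r a b → b ∈ T) → #S ≤ #T)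
    (hright : ∀ (S : Finset A) (T : Finset B), #T ≤ K → (∀ b ∈ T, ∀ a, r a b → a ∈ S) → #T ≤ #S)
    (hlarge : ∀ (S : Finset A) (T : Finset B), K < #S → K < #T → ∃ a ∈ S, ∃ b ∈ T, r a b) :
    ∃ σ : A ≃ B, ∀ a, r a (σ a) := by
  classical
  have hall (S : Finset A) : #S ≤ #{b | ∃ a ∈ S, r a b} := by
    set N : Finset B := {b | ∃ a ∈ S, r a b}
    have mem_N {a b} (ha : a ∈ S) (hab : r a b) : b ∈ N := mem_filter.2 ⟨mem_univ b, a, ha, hab⟩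
    obtain hS | hS := le_or_gt (#S : ℝ) K
    · exact hleft S N hS fun a ha b => mem_N ha
    obtain hT | hT := le_or_gt (#Nᶜ : ℝ) K
    · have := hright Sᶜ Nᶜ hT fun b hb a hab =>
        mem_compl.2 fun ha => mem_compl.1 hb (mem_N ha hab)
      rw [card_compl, card_compl] at this
      have := card_le_univ S
      have := card_le_univ N
      omega
    · obtain ⟨a, ha, b, hb, hab⟩ := hlarge S Nᶜ hS hT
      exact absurd (mem_N ha hab) (mem_compl.1 hb)
  obtain ⟨g, hg, hr⟩ := (Fintype.all_card_le_filter_rel_iff_exists_injective r).1 hall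
  exact ⟨.ofBijective g ((Fintype.bijective_iff_injective_and_card g).2 ⟨hg, hcard⟩), hr⟩

/- In a minimal violator every vertex of the neighborhood has two neighbors: otherwise deleting
it, together with its only neighbor, would leave a smaller violator. -/
lemma exists_tight_hall_violator {A B : Type*}
    (r : A → B → Prop) [DecidableRel r] (S : Finset A) (T : Finset B)
    (hT : ∀ a ∈ S, ∀ b, r a b → b ∈ T) (hlt : #T < #S) :
    ∃ S' ⊆ S, ∃ T' : Finset B, #T' + 1 = #S' ∧ (∀ a ∈ S', ∀ b, r a b → b ∈ T') ∧
      2 * #T' ≤ #{e ∈ S' ×ˢ T' | r e.1 e.2} := by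
  classical
  induction S using Finset.strongInduction generalizing T with
  | H S ih =>
    by_cases hsmaller : ∃ x ∈ S, ∃ T₀ : Finset B, (∀ a ∈ S.erase x, ∀ b, r a b → b ∈ T₀) ∧
        #T₀ < #(S.erase x)
    · obtain ⟨x, hx, T₀, hT₀, hlt₀⟩ := hsmaller
      obtain ⟨S', hS', hviol⟩ := ih _ (erase_ssubset hx) T₀ hT₀ hlt₀
      exact ⟨S', hS'.trans (erase_subset _ _), hviol⟩
    push Not at hsmaller
    obtain ⟨x₀, hx₀⟩ : S.Nonempty := card_pos.1 (by omega)
    have htight : #T + 1 = #S := by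
      have := hsmaller x₀ hx₀ T fun a ha => hT a (mem_of_mem_erase ha)
      rw [card_erase_of_mem hx₀] at this
      omega
    have htwo : ∀ b ∈ T, 2 ≤ #{a ∈ S | r a b} := by
      intro b hb
      by_contra! hcon
      obtain ⟨x, hx, hunique⟩ : ∃ x ∈ S, ∀ a ∈ S, r a b → a = x := by
        obtain hempty | ⟨x, hx⟩ := ({a ∈ S | r a b} : Finset A).eq_empty_or_nonempty
        · exact ⟨x₀, hx₀, fun a ha hab => absurd hab (filter_eq_empty_iff.1 hempty ha)⟩
        · exact ⟨x, (mem_filter.1 hx).1, fun a ha hab =>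
            card_le_one.1 (Nat.le_of_lt_succ hcon) a (mem_filter.2 ⟨ha, hab⟩) x hx⟩
      have := hsmaller x hx (T.erase b) fun a ha b' hab' => mem_erase.2
        ⟨fun hb' => ne_of_mem_erase ha (hunique a (mem_of_mem_erase ha) (hb' ▸ hab')),
          hT a (mem_of_mem_erase ha) b' hab'⟩
      rw [card_erase_of_mem hx, card_erase_of_mem hb] at this
      have := card_pos.2 ⟨b, hb⟩
      omega
    refine ⟨S, Subset.rfl, T, htight, hT, ?_⟩
    rw [card_filter, sum_product_right]
    simp only [← card_filter]
    simpa [mul_comm] using card_nsmul_le_sum T _ 2 htwo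

lemma exists_equiv_of_exists_perm_subtype {A B : Type*} (σ : A ≃ B) (P : A → Prop)
    (r : A → B → Prop)
    (hσ : ∀ a, P a → r a (σ a))
    (hτ : ∃ τ : Equiv.Perm {a // ¬ P a}, ∀ a : {a // ¬ P a}, r a (σ (τ a))) :
    ∃ σ' : A ≃ B, ∀ a, r a (σ' a) := by
  classical
  obtain ⟨τ, hτ⟩ := hτ
  refine ⟨(Equiv.Perm.ofSubtype τ).trans σ, fun a => ?_⟩
  by_cases ha : P a
  · simpa [Equiv.Perm.ofSubtype_apply_of_not_mem τ (not_not.2 ha)] using hσ a ha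
  · simpa [Equiv.Perm.ofSubtype_apply_of_mem τ ha] using hτ ⟨a, ha⟩

end Hall

section Deterministic

variable {A B ι : Type*}

/-- The present pairs of the colored bipartite graph `f` that join `S` to `T`. -/
def edgesBetween (f : A × B → Option ι) (S : Finset A) (T : Finset B) : Finset (A × B) :=
  {e ∈ S ×ˢ T | f e ≠ none}

/-- Every color appears between any two sets of size at least `s`. -/
def IsColorSpread (s : ℝ) (f : A × B → Option ι) : Prop :=
  ∀ (i : ι) (S : Finset A) (T : Finset B), s ≤ #S → s ≤ #T → ∃ a ∈ S, ∃ b ∈ T, f (a, b) = some i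

/-- A nonempty set `S` of at most `K` vertices sends fewer than `c * #S` edges to any set that is
not larger than `S`. -/
def IsLocallySparse (K c : ℝ) (f : A × B → Option ι) : Prop :=
  ∀ (S : Finset A) (T : Finset B), S.Nonempty → #T ≤ #S → #S ≤ K → #(edgesBetween f S T) < c * #S

/-- No set of at most `K` vertices has the shape produced by `exists_tight_hall_violator`. -/
def HasNoTightHallViolator [Fintype B] [DecidableEq B] (K : ℝ) (f : A × B → Option ι) : Prop :=
  ∀ (S : Finset A) (T : Finset B), #S ≤ K → #T + 1 = #S → edgesBetween f S Tᶜ = ∅ →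
    #(edgesBetween f S T) < 2 * #T

section Deficiency

variable [Fintype B] [DecidableEq ι]

/-- The number of edges of color `i` from `a` to the block of vertices labelled `i` by `lab`. -/
def blockDegree (lab : B → Option ι) (f : A × B → Option ι) (i : ι) (a : A) : ℕ :=
  #{b | lab b = some i ∧ f (a, b) = some i}

/-- `a` has fewer than `D` edges of some color to the block of that color. -/
def IsDeficient (lab : B → Option ι) (D : ℝ) (f : A × B → Option ι) (a : A) : Prop :=
  ∃ i, blockDegree lab f i a < D

/-- There are fewer than `X` deficient vertices. -/
def HasFewDeficientVertices (lab : B → Option ι) (D X : ℝ) (f : A × B → Option ι) : Prop :=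
  ∀ W : Finset A, (∀ a ∈ W, IsDeficient lab D f a) → #W < X

/-- For each color, every vertex has fewer than `t` neighbors deficient in that color. -/
def HasFewDeficientNeighbors (lab : B → Option ι) (D : ℝ) (t : ℕ) (f : A × B → Option ι) : Prop :=
  ∀ (i : ι) (b : B) (W : Finset A),
    (∀ a ∈ W, f (a, b) ≠ none ∧ blockDegree lab f i a < D) → #W < t

/-- For each color, fewer than `t` paths of length two start at `a`, continue with the edges of a
matching `M` avoiding `a`, and end in vertices deficient in that color. -/
def HasFewDeficientPaths (lab : B → Option ι) (D : ℝ) (t : ℕ) (f : A × B → Option ι) : Prop :=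
  ∀ (i : ι) (a : A) (M : Finset (A × B)), Set.InjOn Prod.fst (M : Set (A × B)) →
    Set.InjOn Prod.snd (M : Set (A × B)) →
    (∀ e ∈ M, e.1 ≠ a ∧ f (a, e.2) ≠ none ∧ f e ≠ none ∧ blockDegree lab f i e.1 < D) → #M < t

/-- The random-like properties, as seen from the side `A`, that suffice for the rematching
argument: `lab` marks one block of vertices of `B` per color, and `D` is the threshold for
deficiency. Local sparseness holds up to the size at which some color class is large enough for
color spread. -/
structure IsPseudorandom [Fintype ι] [DecidableEq B] (lab : B → Option ι) (s D X : ℝ) (t : ℕ)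
    (f : A × B → Option ι) : Prop where
  isColorSpread : IsColorSpread s f
  isLocallySparse : IsLocallySparse (Fintype.card ι * s) (D / 2) f
  hasNoTightHallViolator : HasNoTightHallViolator (Fintype.card ι * s) f
  hasFewDeficientVertices : HasFewDeficientVertices lab D X f
  hasFewDeficientNeighbors : HasFewDeficientNeighbors lab D t f
  hasFewDeficientPaths : HasFewDeficientPaths lab D t f

end Deficiency

lemma HasNoTightHallViolator.card_le_card [Fintype B] [DecidableEq B] {K : ℝ}
    {f : A × B → Option ι} (hf : HasNoTightHallViolator K f) {S : Finset A} {T : Finset B}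
    (hS : #S ≤ K) (hT : ∀ a ∈ S, ∀ b, f (a, b) ≠ none → b ∈ T) : #S ≤ #T := by
  classical
  by_contra! hlt
  obtain ⟨S', hS', T', htight, hN, hedges⟩ :=
    exists_tight_hall_violator (fun a b => f (a, b) ≠ none) S T hT hlt
  refine (hf S' T' (le_trans (mod_cast Finset.card_le_card hS') hS) htight ?_).not_ge hedges
  refine filter_eq_empty_iff.2 fun e he => not_not.2 ?_
  rw [mem_product, mem_compl] at he
  by_contra hne
  exact he.2 (hN e.1 he.1 e.2 hne)

lemma IsLocallySparse.card_le_card {K c : ℝ} {f : A × B → Option ι} (hf : IsLocallySparse K c f)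
    {S : Finset A} {T : Finset B} (hS : #S ≤ K)
    (hdeg : ∀ a ∈ S, c ≤ #{b ∈ T | f (a, b) ≠ none}) : #S ≤ #T := by
  by_contra! hlt
  refine (hf S T (card_pos.1 (by omega)) hlt.le hS).not_ge ?_
  calc c * #S = ∑ _a ∈ S, c := by rw [sum_const, nsmul_eq_mul, mul_comm]
    _ ≤ ∑ a ∈ S, (#{b ∈ T | f (a, b) ≠ none} : ℝ) := sum_le_sum hdeg
    _ = #(edgesBetween f S T) := by
      simp only [edgesBetween, card_filter, sum_product, Nat.cast_sum]

lemma IsColorSpread.exists_coloring_edge [Fintype ι] {s : ℝ} {f : A × B → Option ι}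
    (hf : IsColorSpread s f) (hs : s ≤ Fintype.card ι * s) (c : A → ι) {S : Finset A} {T : Finset B}
    (hS : Fintype.card ι * s < #S) (hT : Fintype.card ι * s < #T) :
    ∃ a ∈ S, ∃ b ∈ T, f (a, b) = some (c a) := by
  classical
  obtain ⟨i, -, hi⟩ : ∃ i ∈ univ, s < #{a ∈ S | c a = i} := by
    refine exists_lt_of_sum_lt ?_
    rw [sum_const, nsmul_eq_mul, card_univ, ← Nat.cast_sum,
      ← card_eq_sum_card_fiberwise fun a _ => mem_univ (c a)]
    exact hS
  obtain ⟨a, ha, b, hb, hab⟩ := hf i _ T hi.le (hs.trans hT.le)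
  obtain ⟨haS, rfl⟩ := mem_filter.1 ha
  exact ⟨a, haS, b, hb, hab⟩

variable [Fintype A] [Fintype B] [Fintype ι] [DecidableEq A] [DecidableEq B] [DecidableEq ι]

/-- In the rematching argument the edge of the perfect matching `σ` at `a` is kept if one of its
endpoints is deficient. -/
def IsKept (labA : A → Option ι) (labB : B → Option ι) (D : ℝ) (f : A × B → Option ι) (σ : A ≃ B)
    (a : A) : Prop :=
  IsDeficient labB D f a ∨ IsDeficient labA D (f ∘ Prod.swap) (σ a)

variable {labA : A → Option ι} {labB : B → Option ι} {s D X : ℝ} {t : ℕ} {f : A × B → Option ι}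
  {σ : A ≃ B}

lemma IsPseudorandom.card_le_of_isDeficient_neighbors (hfA : IsPseudorandom labB s D X t f)
    (hfB : IsPseudorandom labA s D X t (f ∘ Prod.swap)) (hσ : ∀ a, f (a, σ a) ≠ none) {a : A}
    (ha : ¬ IsDeficient labB D f a) {N : Finset A}
    (hN : ∀ x ∈ N, f (a, σ x) ≠ none ∧ IsKept labA labB D f σ x) :
    #N ≤ 2 * Fintype.card ι * t := by
  classical
  let N₁ (i : ι) : Finset A := {x ∈ N | blockDegree labB f i x < D}
  let N₂ (i : ι) : Finset A := {x ∈ N | blockDegree labA (f ∘ Prod.swap) i (σ x) < D}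
  have hN₁ (i : ι) : #(N₁ i) ≤ t := by
    rw [← card_image_of_injective (f := fun x => (x, σ x)) _ fun x y h => congrArg Prod.fst h]
    refine (hfA.hasFewDeficientPaths i a _ (by simp [Set.InjOn]) (by simp [Set.InjOn]) ?_).le
    simp only [N₁, Finset.mem_image, mem_filter]
    rintro _ ⟨x, ⟨hx, hdef⟩, rfl⟩
    exact ⟨by rintro rfl; exact ha ⟨i, hdef⟩, (hN x hx).1, hσ x, hdef⟩
  have hN₂ (i : ι) : #(N₂ i) ≤ t := by
    rw [← card_map σ.toEmbedding]
    refine (hfB.hasFewDeficientNeighbors i a _ ?_).le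
    simp only [N₂, Finset.mem_map, mem_filter]
    rintro _ ⟨x, ⟨hx, hdef⟩, rfl⟩
    exact ⟨(hN x hx).1, hdef⟩
  have hcover : N ⊆ univ.biUnion fun i => N₁ i ∪ N₂ i := by
    intro x hx
    obtain ⟨i, hi⟩ | ⟨i, hi⟩ := (hN x hx).2
    · exact mem_biUnion.2 ⟨i, mem_univ i, mem_union_left _ (mem_filter.2 ⟨hx, hi⟩)⟩
    · exact mem_biUnion.2 ⟨i, mem_univ i, mem_union_right _ (mem_filter.2 ⟨hx, hi⟩)⟩
  calc #N ≤ #(univ.biUnion fun i => N₁ i ∪ N₂ i) := card_le_card hcover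
    _ ≤ #(univ : Finset ι) * (t + t) := card_biUnion_le_card_mul _ _ _ fun i _ =>
      (card_union_le _ _).trans (add_le_add (hN₁ i) (hN₂ i))
    _ = 2 * Fintype.card ι * t := by rw [card_univ]; ring

lemma IsPseudorandom.half_le_card_of_not_isDeficient (hfA : IsPseudorandom labB s D X t f)
    (hfB : IsPseudorandom labA s D X t (f ∘ Prod.swap)) (hσ : ∀ a, f (a, σ a) ≠ none)
    (hD : 4 * Fintype.card ι * t ≤ D) {a : A} (ha : ¬ IsDeficient labB D f a) (i : ι)
    {T : Finset B} (hT : ∀ x, labB (σ x) = some i → f (a, σ x) = some i →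
      ¬ IsKept labA labB D f σ x → σ x ∈ T) :
    D / 2 ≤ #{b ∈ T | f (a, b) ≠ none} := by
  classical
  let N : Finset A := {x | f (a, σ x) ≠ none ∧ IsKept labA labB D f σ x}
  have hN : #N ≤ 2 * Fintype.card ι * t :=
    hfA.card_le_of_isDeficient_neighbors hfB hσ ha fun x hx => (mem_filter.1 hx).2
  have hcover : ({b | labB b = some i ∧ f (a, b) = some i} : Finset B) ⊆
      {b ∈ T | f (a, b) ≠ none} ∪ N.map σ.toEmbedding := by
    intro b hb
    obtain ⟨x, rfl⟩ := σ.surjective b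
    obtain ⟨hlab, hcol⟩ := (mem_filter.1 hb).2
    have hne : f (a, σ x) ≠ none := by simp [hcol]
    by_cases hx : IsKept labA labB D f σ x
    · exact mem_union_right _ (mem_map_of_mem _ (mem_filter.2 ⟨mem_univ x, hne, hx⟩))
    · exact mem_union_left _ (mem_filter.2 ⟨hT x hlab hcol hx, hne⟩)
  have hdeg : blockDegree labB f i a ≤ #{b ∈ T | f (a, b) ≠ none} + 2 * Fintype.card ι * t := by
    refine (card_le_card hcover).trans ((card_union_le _ _).trans ?_)
    rw [card_map]
    gcongr
  have hdeg' : (blockDegree labB f i a : ℝ) ≤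
      #{b ∈ T | f (a, b) ≠ none} + 2 * Fintype.card ι * t := mod_cast hdeg
  have := not_lt.1 (not_exists.1 ha i)
  linarith

lemma IsPseudorandom.exists_perfect_matching [Nonempty ι] (hs : 0 ≤ s)
    (hcard : Fintype.card A = Fintype.card B) (hfA : IsPseudorandom labB s D X t f)
    (hfB : IsPseudorandom labA s D X t (f ∘ Prod.swap)) : ∃ σ : A ≃ B, ∀ a, f (a, σ a) ≠ none := by
  have hsK : s ≤ Fintype.card ι * s :=
    le_mul_of_one_le_left hs (mod_cast Fintype.card_pos (α := ι))
  refine exists_equiv_of_expansion (fun a b => f (a, b) ≠ none) hcard (Fintype.card ι * s)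
    (fun S T hS => hfA.hasNoTightHallViolator.card_le_card hS)
    (fun S T hT => hfB.hasNoTightHallViolator.card_le_card hT) fun S T hS hT => ?_
  obtain ⟨a, ha, b, hb, hab⟩ := hfA.isColorSpread (Classical.arbitrary ι) S T
    (hsK.trans hS.le) (hsK.trans hT.le)
  exact ⟨a, ha, b, hb, by simp [hab]⟩

/- Hall's condition: small sets expand along the edges into the blocks because of local sparseness,
and large sets are joined by color spread. -/
lemma IsPseudorandom.exists_perm_unkept [Nonempty ι] (hs : 0 ≤ s)
    (hD : 4 * Fintype.card ι * t ≤ D) (hfA : IsPseudorandom labB s D X t f)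
    (hfB : IsPseudorandom labA s D X t (f ∘ Prod.swap)) (hσ : ∀ a, f (a, σ a) ≠ none) (c : A → ι)
    (hc : ∀ a i, ¬ IsKept labA labB D f σ a → labA a = some i → c a = i) :
    ∃ τ : Equiv.Perm {a // ¬ IsKept labA labB D f σ a},
      ∀ a : {a // ¬ IsKept labA labB D f σ a}, f (a, σ (τ a)) = some (c a) := by
  classical
  set U := {a // ¬ IsKept labA labB D f σ a}
  let toA : U ↪ A := Function.Embedding.subtype _
  let toB : U ↪ B := toA.trans σ.toEmbedding
  have hsK : s ≤ Fintype.card ι * s :=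
    le_mul_of_one_le_left hs (mod_cast Fintype.card_pos (α := ι))
  refine exists_equiv_of_expansion (fun u v : U => f (u, σ v) = some (c u)) rfl
    (Fintype.card ι * s) (fun S T hS hN => ?_) (fun S T hT hN => ?_) fun S T hS hT => ?_
  · rw [← card_map toA, ← card_map (s := T) toB]
    refine hfA.isLocallySparse.card_le_card (by rwa [card_map]) fun a ha => ?_
    obtain ⟨u, hu, rfl⟩ := Finset.mem_map.1 ha
    refine hfA.half_le_card_of_not_isDeficient hfB hσ hD (fun h => u.2 (.inl h)) (c u) ?_
    exact fun x _ hcol hx => mem_map_of_mem toB (hN u hu ⟨x, hx⟩ hcol)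
  · rw [← card_map toB, ← card_map (s := S) toA]
    refine hfB.isLocallySparse.card_le_card (by rwa [card_map]) fun b hb => ?_
    obtain ⟨v, hv, rfl⟩ := Finset.mem_map.1 hb
    refine hfB.half_le_card_of_not_isDeficient (σ := σ.symm) hfA
      (fun b => by simpa using hσ (σ.symm b)) hD (fun h => v.2 (.inr h)) (Classical.arbitrary ι)
      fun b hlab hcol hb => ?_
    have hb' : ¬ IsKept labA labB D f σ (σ.symm b) := fun h =>
      hb (h.symm.imp_left fun h => by rwa [σ.apply_symm_apply] at h)
    refine mem_map_of_mem toA (a := ⟨σ.symm b, hb'⟩) (hN v hv _ ?_)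
    exact hcol.trans (congrArg some (hc _ _ hb' hlab).symm)
  · obtain ⟨a, ha, b, hb, hab⟩ := hfA.isColorSpread.exists_coloring_edge hsK c
      (S := S.map toA) (T := T.map toB) (by rwa [card_map]) (by rwa [card_map])
    obtain ⟨u, hu, rfl⟩ := Finset.mem_map.1 ha
    obtain ⟨v, hv, rfl⟩ := Finset.mem_map.1 hb
    exact ⟨u, hu, v, hv, hab⟩

lemma IsPseudorandom.card_isKept_lt (hfA : IsPseudorandom labB s D X t f)
    (hfB : IsPseudorandom labA s D X t (f ∘ Prod.swap)) {W : Finset A}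
    (hW : ∀ a ∈ W, IsKept labA labB D f σ a) : #W < 2 * X := by
  classical
  have hA : #{a ∈ W | IsDeficient labB D f a} < X := hfA.hasFewDeficientVertices _ fun a ha =>
    (mem_filter.1 ha).2
  have hB : #{a ∈ W | ¬ IsDeficient labB D f a} < X := by
    rw [← card_map σ.toEmbedding]
    refine hfB.hasFewDeficientVertices _ fun b hb => ?_
    obtain ⟨a, ha, rfl⟩ := Finset.mem_map.1 hb
    exact (hW a (mem_filter.1 ha).1).resolve_left (mem_filter.1 ha).2
  rw [← card_filter_add_card_filter_not (s := W) (IsDeficient labB D f), Nat.cast_add]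
  linarith

theorem IsPseudorandom.exists_perfect_matching_with_profile [Nonempty ι] (hs : 0 ≤ s)
    (hD : 4 * Fintype.card ι * t ≤ D) (hcard : Fintype.card A = Fintype.card B)
    (hfA : IsPseudorandom labB s D X t f) (hfB : IsPseudorandom labA s D X t (f ∘ Prod.swap))
    {m : ι → ℕ} (hm : ∑ i, m i = Fintype.card A)
    (hblock : ∀ i, #{a | labA a = some i} + 2 * X ≤ m i) :
    ∃ σ : A ≃ B, (∀ a, f (a, σ a) ≠ none) ∧ ∀ i, #{a | f (a, σ a) = some i} = m i := by
  classical
  obtain ⟨σ, hσ⟩ := hfA.exists_perfect_matching hs hcard hfB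
  let g (a : A) : Option ι := if IsKept labA labB D f σ a then f (a, σ a) else labA a
  have hg (i : ι) : #{a | g a = some i} ≤ m i := by
    let W : Finset A := {a | IsKept labA labB D f σ a}
    have hW : #W < 2 * X := hfA.card_isKept_lt hfB fun a ha => (mem_filter.1 ha).2
    have hsub : ({a | g a = some i} : Finset A) ⊆ ({a | labA a = some i} : Finset A) ∪ W := by
      intro a ha
      by_cases hkept : IsKept labA labB D f σ a <;> simp_all [g, W]
    have hle : (#{a | g a = some i} : ℝ) ≤ #{a | labA a = some i} + #W :=
      mod_cast (card_le_card hsub).trans (card_union_le _ _)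
    have := hblock i
    exact_mod_cast show (#{a | g a = some i} : ℝ) ≤ m i by linarith
  obtain ⟨c, hgc, hcm⟩ := exists_coloring_extending g m hg hm
  obtain ⟨τ, hτ⟩ := exists_equiv_of_exists_perm_subtype σ (IsKept labA labB D f σ)
    (fun a b => f (a, b) = some (c a))
    (fun a ha => by
      obtain ⟨i, hi⟩ := Option.ne_none_iff_exists'.1 (hσ a)
      rw [hi, hgc a i (by simp [g, ha, hi])])
    (hfA.exists_perm_unkept hs hD hfB hσ c fun a i ha hi => hgc a i (by simp [g, ha, hi]))
  exact ⟨τ, fun a => by simp [hτ], fun i => by simp [hτ, hcm]⟩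

end Deterministic

section UnionBound

variable {Ω X : Type*} [MeasurableSpace Ω] (μ : Measure Ω)

lemma measureReal_exists_mem_le_sum (I : Finset X) (P : X → Ω → Prop) :
    μ.real {ω | ∃ x ∈ I, P x ω} ≤ ∑ x ∈ I, μ.real {ω | P x ω} := by
  convert measureReal_biUnion_finset_le I fun x => {ω | P x ω}
  ext ω
  simp

lemma measureReal_exists_mem_le_card_mul (I : Finset X) (P : X → Ω → Prop) {c : ℝ}
    (hc : ∀ x ∈ I, μ.real {ω | P x ω} ≤ c) : μ.real {ω | ∃ x ∈ I, P x ω} ≤ #I * c := by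
  rw [← nsmul_eq_mul]
  exact (measureReal_exists_mem_le_sum μ I P).trans (sum_le_card_nsmul I _ c hc)

lemma mul_measureReal_le_card_filter_le_sum [IsFiniteMeasure μ]
    [DiscreteMeasurableSpace Ω] (I : Finset X)
    (P : X → Ω → Prop) [∀ ω, DecidablePred fun x => P x ω] (k : ℝ) :
    k * μ.real {ω | k ≤ #{x ∈ I | P x ω}} ≤ ∑ x ∈ I, μ.real {ω | P x ω} := by
  have hcount (ω : Ω) : (#{x ∈ I | P x ω} : ℝ) = ∑ x ∈ I, {ω | P x ω}.indicator 1 ω := by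
    simp [Set.indicator_apply]
  have hint : ∀ x ∈ I, Integrable ({ω | P x ω}.indicator (1 : Ω → ℝ)) μ := fun x _ =>
    (integrable_const 1).indicator (.of_discrete)
  simp only [hcount]
  refine (mul_meas_ge_le_integral_of_nonneg (.of_forall fun ω => sum_nonneg fun x _ =>
    Set.indicator_nonneg (fun _ _ => zero_le_one) ω) (integrable_finsetSum I hint) k).trans_eq ?_
  exact (integral_finsetSum I hint).trans <|
    sum_congr rfl fun x _ => integral_indicator_one .of_discrete

end UnionBound

section IndependentTrials

variable {E Ω : Type*} [Fintype E] [MeasurableSpace Ω] (ν : Measure Ω) [IsProbabilityMeasure ν]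

lemma integral_prod_mul_prod {F G : Finset E} (hFG : Disjoint F G) (φ ψ : Ω → ℝ) :
    ∫ f : E → Ω, (∏ e ∈ F, φ (f e)) * ∏ e ∈ G, ψ (f e) ∂Measure.pi (fun _ => ν) =
      (∫ ω, φ ω ∂ν) ^ #F * (∫ ω, ψ ω ∂ν) ^ #G := by
  classical
  let w (e : E) (ω : Ω) : ℝ := (if e ∈ F then φ ω else 1) * if e ∈ G then ψ ω else 1
  have hw (e : E) : ∫ ω, w e ω ∂ν =
      (if e ∈ F then ∫ ω, φ ω ∂ν else 1) * if e ∈ G then ∫ ω, ψ ω ∂ν else 1 := by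
    by_cases heF : e ∈ F
    · simp [w, heF, Finset.disjoint_left.1 hFG heF]
    · by_cases heG : e ∈ G <;> simp [w, heF, heG]
  calc _ = ∫ f : E → Ω, ∏ e, w e (f e) ∂Measure.pi (fun _ => ν) := by
        simp only [w, prod_mul_distrib, prod_ite_mem, univ_inter]
    _ = ∏ e, ∫ ω, w e ω ∂ν := integral_fintype_prod_eq_prod w
    _ = _ := by simp only [hw, prod_mul_distrib, prod_ite_mem, univ_inter, prod_const]

variable [Finite Ω] [DiscreteMeasurableSpace Ω]

lemma integral_exp_mul_indicator_le (s : Set Ω) (l : ℝ) :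
    ∫ ω, Real.exp (l * s.indicator 1 ω) ∂ν ≤ Real.exp (ν.real s * (Real.exp l - 1)) := by
  have hexp (ω : Ω) : Real.exp (l * s.indicator 1 ω) =
      1 + s.indicator (fun _ => Real.exp l - 1) ω := by
    by_cases hω : ω ∈ s <;> simp [hω]
  simp only [hexp]
  rw [integral_add .of_finite .of_finite, integral_indicator_const _ .of_discrete,
    integral_const, probReal_univ, one_smul, smul_eq_mul, add_comm]
  exact Real.add_one_le_exp _

/-- Exponential Markov inequality for the product weight `∏ e ∈ F, 1_s (f e)` times
`∏ e ∈ G, exp (l * 1_u (f e))`. A positive `l` bounds an upper tail, a negative `l` a lower one. -/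
lemma measureReal_forall_mem_and_mul_le_mul_card_le {F G : Finset E}
    (hFG : Disjoint F G) (s u : Set Ω) [DecidablePred (· ∈ u)] (l k : ℝ) :
    (Measure.pi fun _ : E => ν).real
        {f | (∀ e ∈ F, f e ∈ s) ∧ l * k ≤ l * #{e ∈ G | f e ∈ u}} ≤
      ν.real s ^ #F * Real.exp (ν.real u * (Real.exp l - 1) * #G - l * k) := by
  set μ := Measure.pi fun _ : E => ν
  set P : Set (E → Ω) := {f | (∀ e ∈ F, f e ∈ s) ∧ l * k ≤ l * #{e ∈ G | f e ∈ u}}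
  let φ : Ω → ℝ := s.indicator 1
  let ψ (ω : Ω) : ℝ := Real.exp (l * u.indicator 1 ω)
  have hφ (ω : Ω) : 0 ≤ φ ω := Set.indicator_nonneg (fun _ _ => zero_le_one) ω
  have hψ (f : E → Ω) : ∏ e ∈ G, ψ (f e) = Real.exp (l * #{e ∈ G | f e ∈ u}) := by
    rw [← Real.exp_sum, ← mul_sum]
    simp [Set.indicator_apply]
  have hmarkov : μ.real P ≤
      ∫ f, Real.exp (-(l * k)) * ((∏ e ∈ F, φ (f e)) * ∏ e ∈ G, ψ (f e)) ∂μ := by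
    rw [← integral_indicator_one .of_discrete]
    refine integral_mono .of_finite .of_finite fun f => Set.indicator_apply_le' (fun hf => ?_)
      fun _ => by positivity [prod_nonneg fun e (_ : e ∈ F) => hφ (f e)]
    have hF : ∏ e ∈ F, φ (f e) = 1 := prod_eq_one fun e he => by simp [φ, hf.1 e he]
    rw [hF, one_mul, hψ, ← Real.exp_add]
    exact Real.one_le_exp (by linarith [hf.2])
  calc μ.real P ≤ _ := hmarkov
    _ = Real.exp (-(l * k)) * (ν.real s ^ #F * (∫ ω, ψ ω ∂ν) ^ #G) := by
      rw [integral_const_mul, integral_prod_mul_prod ν hFG, integral_indicator_one .of_discrete]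
    _ ≤ Real.exp (-(l * k)) *
        (ν.real s ^ #F * Real.exp (ν.real u * (Real.exp l - 1)) ^ #G) := by
      gcongr
      exact integral_exp_mul_indicator_le ν u l
    _ = _ := by
      rw [← Real.exp_nat_mul, mul_left_comm, ← Real.exp_add]
      ring_nf

end IndependentTrials

lemma choose_mul_succ_pow_le (n r : ℕ) :
    (n.choose r * (r + 1) ^ r : ℝ) ≤ n ^ r * Real.exp (r + 1) := by
  have hexp := Real.pow_div_factorial_le_exp (r + 1 : ℝ) (by positivity) r
  calc (n.choose r * (r + 1) ^ r : ℝ) ≤ n ^ r / r.factorial * (r + 1) ^ r := by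
        gcongr
        exact Nat.choose_le_pow_div r n
    _ = n ^ r * ((r + 1) ^ r / r.factorial) := by ring
    _ ≤ n ^ r * Real.exp (r + 1) := by gcongr

lemma choose_succ_mul_choose_mul_le (n r : ℕ) :
    (n.choose (r + 1) * n.choose r * ((r + 1) ^ r) ^ 2 : ℝ) ≤
      Real.exp 2 * n * (Real.exp 2 * n ^ 2) ^ r := by
  have hsucc : n.choose (r + 1) ≤ n * n.choose r := by
    calc n.choose (r + 1) ≤ n.choose (r + 1) * (r + 1) := Nat.le_mul_of_pos_right _ r.succ_pos
      _ = n.choose r * (n - r) := Nat.choose_succ_right_eq n r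
      _ ≤ n * n.choose r := by rw [mul_comm]; gcongr; omega
  have hexp : Real.exp (r + 1) ^ 2 = Real.exp 2 * Real.exp 2 ^ r := by
    rw [← Real.exp_nat_mul, ← Real.exp_nat_mul, ← Real.exp_add]
    push_cast
    ring_nf
  calc (n.choose (r + 1) * n.choose r * ((r + 1) ^ r) ^ 2 : ℝ)
      ≤ n * n.choose r * n.choose r * ((r + 1) ^ r) ^ 2 := by
        gcongr
        exact_mod_cast hsucc
    _ = n * (n.choose r * (r + 1) ^ r) ^ 2 := by ring
    _ ≤ n * (n ^ r * Real.exp (r + 1)) ^ 2 := by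
      exact mul_le_mul_of_nonneg_left (pow_le_pow_left₀ (by positivity)
        (choose_mul_succ_pow_le n r) 2) n.cast_nonneg
    _ = n * (n ^ r) ^ 2 * Real.exp (r + 1) ^ 2 := by ring
    _ = Real.exp 2 * n * (Real.exp 2 * n ^ 2) ^ r := by
      rw [hexp]
      ring

section FailureBounds

variable {A B ι : Type*} [Fintype A] [Fintype B] [MeasurableSpace (Option ι)]
  [DiscreteMeasurableSpace (Option ι)] (ν : Measure (Option ι)) [IsProbabilityMeasure ν]

lemma measureReal_not_isColorSpread_le [Fintype ι] {r s : ℝ} (hs : 0 ≤ s)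
    (hr : ∀ i, r ≤ ν.real {some i}) :
    (Measure.pi fun _ : A × B => ν).real {f | ¬ IsColorSpread s f} ≤
      Fintype.card ι * (2 ^ Fintype.card A * 2 ^ Fintype.card B) * Real.exp (-(r * s ^ 2)) := by
  set μ := Measure.pi fun _ : A × B => ν
  let Miss (x : ι × Finset A × Finset B) (f : A × B → Option ι) : Prop :=
    s ≤ #x.2.1 ∧ s ≤ #x.2.2 ∧ ∀ e ∈ x.2.1 ×ˢ x.2.2, f e ∈ ({some x.1}ᶜ : Set (Option ι))
  have hmiss (x : ι × Finset A × Finset B) : μ.real {f | Miss x f} ≤ Real.exp (-(r * s ^ 2)) := by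
    obtain ⟨i, S, T⟩ := x
    by_cases hST : s ≤ #S ∧ s ≤ #T
    swap; · simpa [Miss, ← and_assoc, hST] using (Real.exp_pos _).le
    have htail := measureReal_forall_mem_and_mul_le_mul_card_le ν (disjoint_empty_right (S ×ˢ T))
      {some i}ᶜ ∅ 0 0
    calc μ.real {f | Miss (i, S, T) f} ≤ ν.real {some i}ᶜ ^ #(S ×ˢ T) := by
          simpa [Miss, hST.1, hST.2] using htail
      _ ≤ Real.exp (-ν.real {some i}) ^ #(S ×ˢ T) := by
        rw [probReal_compl_eq_one_sub .of_discrete]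
        gcongr
        · exact sub_nonneg.2 measureReal_le_one
        · linarith [Real.add_one_le_exp (-ν.real {some i})]
      _ ≤ Real.exp (-(r * s ^ 2)) := by
        rw [← Real.exp_nat_mul, card_product, Real.exp_le_exp]
        have hsq : s ^ 2 ≤ #S * #T := by nlinarith
        have := mul_le_mul_of_nonneg_right (hr i) (sq_nonneg s)
        have := mul_le_mul_of_nonneg_left hsq (measureReal_nonneg (μ := ν) (s := {some i}))
        push_cast
        linarith
  have hsub : {f | ¬ IsColorSpread s f} ⊆ {f | ∃ x ∈ univ, Miss x f} := by
    intro f hf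
    simp only [IsColorSpread, Set.mem_ofPred_eq, not_forall, not_exists, not_and] at hf
    obtain ⟨i, S, T, hS, hT, hmiss⟩ := hf
    exact ⟨(i, S, T), mem_univ _, hS, hT, fun e he =>
      hmiss e.1 (mem_product.1 he).1 e.2 (mem_product.1 he).2⟩
  calc _ ≤ μ.real {f | ∃ x ∈ univ, Miss x f} := measureReal_mono hsub
    _ ≤ #(univ : Finset (ι × Finset A × Finset B)) * Real.exp (-(r * s ^ 2)) :=
      measureReal_exists_mem_le_card_mul μ univ Miss fun x _ => hmiss x
    _ = _ := by simp [Fintype.card_prod, Fintype.card_finset]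

lemma measureReal_singleton_none_le [Finite ι] :
    ν.real {none} ≤ Real.exp (-ν.real {none}ᶜ) := by
  rw [probReal_compl_eq_one_sub .of_discrete]
  linarith [Real.add_one_le_exp (-(1 - ν.real {none}))]

lemma measureReal_edgesBetween_eq_empty_and_le_card_le [Finite ι] {l : ℝ} (hl : 0 ≤ l) (k : ℝ)
    (S : Finset A) {T₀ T : Finset B} (hT : Disjoint T₀ T) :
    (Measure.pi fun _ : A × B => ν).real
        {f | edgesBetween f S T₀ = ∅ ∧ k ≤ #(edgesBetween f S T)} ≤
      Real.exp (-ν.real {none}ᶜ * (#S * #T₀) +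
        ν.real {none}ᶜ * (Real.exp l - 1) * (#S * #T) - l * k) := by
  set p := ν.real {none}ᶜ
  have htail := measureReal_forall_mem_and_mul_le_mul_card_le ν
    (disjoint_product.2 (.inr hT) : Disjoint (S ×ˢ T₀) (S ×ˢ T)) {none} {none}ᶜ l k
  calc _ ≤ ν.real {none} ^ #(S ×ˢ T₀) * Real.exp (p * (Real.exp l - 1) * #(S ×ˢ T) - l * k) :=
        htail.trans' <| measureReal_mono fun f hf =>
          ⟨by simpa [edgesBetween, filter_eq_empty_iff] using hf.1, by
            simpa [edgesBetween] using mul_le_mul_of_nonneg_left hf.2 hl⟩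
    _ ≤ Real.exp (-p) ^ #(S ×ˢ T₀) * Real.exp (p * (Real.exp l - 1) * #(S ×ˢ T) - l * k) := by
      have hnone := measureReal_singleton_none_le ν
      gcongr
    _ = _ := by
      rw [← Real.exp_nat_mul, ← Real.exp_add, card_product, card_product]
      push_cast
      ring_nf

lemma measureReal_le_card_edgesBetween_le [Finite ι] {K c l y : ℝ} (hl : 0 ≤ l) (hy : 0 ≤ y)
    (hc : ν.real {none}ᶜ * Real.exp l * K + 2 * y ≤ l * c) {S : Finset A} {T : Finset B}
    (hTS : #T ≤ #S) (hSK : #S ≤ K) :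
    (Measure.pi fun _ : A × B => ν).real {f | c * #S ≤ #(edgesBetween f S T)} ≤
      Real.exp (-y) ^ #S * Real.exp (-y) ^ #T := by
  set p := ν.real {none}ᶜ
  have hTS' : (#T : ℝ) ≤ #S := mod_cast hTS
  have hexponent : p * (Real.exp l - 1) * (#S * #T) - l * (c * #S) ≤ -y * #S + -y * #T := by
    have h₁ : p * (Real.exp l - 1) * (#S * #T) ≤ p * Real.exp l * (#S * K) := by
      gcongr
      · linarith
      · linarith
    have h₂ := mul_le_mul_of_nonneg_right hc (Nat.cast_nonneg (α := ℝ) #S)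
    have h₃ := mul_le_mul_of_nonneg_left hTS' hy
    linarith
  calc _ ≤ Real.exp (p * (Real.exp l - 1) * (#S * #T) - l * (c * #S)) := by
        simpa [edgesBetween] using measureReal_edgesBetween_eq_empty_and_le_card_le ν hl (c * #S) S
          (disjoint_empty_left T)
    _ ≤ Real.exp (-y * #S + -y * #T) := Real.exp_le_exp.2 hexponent
    _ = _ := by rw [Real.exp_add, ← Real.exp_nat_mul, ← Real.exp_nat_mul]; ring_nf

/-- Half of the decay `exp (-2y)` per vertex of `S` pays for the choice of `S`, the other half for
the choice of `T`. -/
lemma measureReal_not_isLocallySparse_le [Finite ι] {K c l y : ℝ} (hl : 0 ≤ l) (hy : 0 ≤ y)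
    (hc : ν.real {none}ᶜ * Real.exp l * K + 2 * y ≤ l * c) :
    (Measure.pi fun _ : A × B => ν).real {f | ¬ IsLocallySparse K c f} ≤
      ((1 + Real.exp (-y)) ^ Fintype.card A - 1) * (1 + Real.exp (-y)) ^ Fintype.card B := by
  classical
  set μ := Measure.pi fun _ : A × B => ν
  let Dense (x : Finset A × Finset B) (f : A × B → Option ι) : Prop :=
    #x.2 ≤ #x.1 ∧ #x.1 ≤ K ∧ c * #x.1 ≤ #(edgesBetween f x.1 x.2)
  have hdense (x : Finset A × Finset B) :
      μ.real {f | Dense x f} ≤ Real.exp (-y) ^ #x.1 * Real.exp (-y) ^ #x.2 := by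
    by_cases hx : #x.2 ≤ #x.1 ∧ #x.1 ≤ K
    · simpa [Dense, hx.1, hx.2] using measureReal_le_card_edgesBetween_le ν hl hy hc hx.1 hx.2
    · simpa [Dense, ← and_assoc, hx] using by positivity
  have hsub : {f | ¬ IsLocallySparse K c f} ⊆ {f | ∃ x ∈ univ.erase ∅ ×ˢ univ, Dense x f} := by
    intro f hf
    simp only [IsLocallySparse, Set.mem_ofPred_eq, not_forall, not_lt] at hf
    obtain ⟨S, T, hS, hTS, hK, hdense⟩ := hf
    exact ⟨(S, T), by simp [hS.ne_empty], hTS, hK, hdense⟩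
  calc _ ≤ μ.real {f | ∃ x ∈ univ.erase ∅ ×ˢ univ, Dense x f} := measureReal_mono hsub
    _ ≤ ∑ x ∈ univ.erase ∅ ×ˢ univ, μ.real {f | Dense x f} := measureReal_exists_mem_le_sum μ _ _
    _ ≤ ∑ x ∈ univ.erase (∅ : Finset A) ×ˢ (univ : Finset (Finset B)),
        Real.exp (-y) ^ #x.1 * Real.exp (-y) ^ #x.2 := sum_le_sum fun x _ => hdense x
    _ = (∑ S ∈ univ.erase (∅ : Finset A), Real.exp (-y) ^ #S) *
        ∑ T : Finset B, Real.exp (-y) ^ #T := by rw [sum_product, sum_mul_sum]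
    _ = _ := by
      have hA := Fintype.sum_pow_mul_eq_add_pow A (Real.exp (-y)) 1
      have hB := Fintype.sum_pow_mul_eq_add_pow B (Real.exp (-y)) 1
      simp only [one_pow, mul_one] at hA hB
      rw [sum_erase_eq_sub (mem_univ ∅), hA, hB, card_empty, pow_zero, add_comm 1]

section Deficiency

variable [DecidableEq ι] {lab : B → Option ι} {D y : ℝ} {t : ℕ}

lemma measureReal_forall_ne_none_and_blockDegree_lt_le [Finite ι] {i : ι} {F : Finset (A × B)}
    {W : Finset A} {U : Finset B} (hF : Disjoint F (W ×ˢ U)) (hlab : ∀ b ∈ U, lab b = some i)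
    (hU : D + y ≤ ν.real {some i} * #U / 2) :
    (Measure.pi fun _ : A × B => ν).real
        {f | (∀ e ∈ F, f e ≠ none) ∧ ∀ a ∈ W, blockDegree lab f i a < D} ≤
      ν.real {none}ᶜ ^ #F * Real.exp (-y) ^ #W := by
  set r := ν.real {some i}
  have hcount (f : A × B → Option ι) (hf : ∀ a ∈ W, blockDegree lab f i a < D) :
      (#{e ∈ W ×ˢ U | f e = some i} : ℝ) ≤ D * #W := by
    calc (#{e ∈ W ×ˢ U | f e = some i} : ℝ) = ∑ a ∈ W, (#{b ∈ U | f (a, b) = some i} : ℝ) := by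
          simp only [card_filter, sum_product, Nat.cast_sum]
      _ ≤ ∑ _a ∈ W, D := sum_le_sum fun a ha => (hf a ha).le.trans' <| Nat.cast_le.2 <|
          card_le_card fun b => by simp +contextual [hlab]
      _ = D * #W := by rw [sum_const, nsmul_eq_mul, mul_comm]
  have hexp_neg_one : Real.exp (-1) ≤ 1 / 2 := by
    rw [Real.exp_neg, one_div]
    exact inv_anti₀ two_pos (by linarith [Real.add_one_le_exp 1])
  have htail := measureReal_forall_mem_and_mul_le_mul_card_le ν hF {none}ᶜ {some i} (-1) (D * #W)
  calc _ ≤ ν.real {none}ᶜ ^ #F * Real.exp (r * (Real.exp (-1) - 1) * #(W ×ˢ U) - -1 * (D * #W)) :=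
        htail.trans' <| measureReal_mono fun f hf =>
          ⟨by simpa using hf.1, by simpa using hcount f hf.2⟩
    _ ≤ ν.real {none}ᶜ ^ #F * Real.exp (#W * -y) := by
      gcongr
      have hdrift : r * (#W * #U) * Real.exp (-1) ≤ r * (#W * #U) * (1 / 2) := by gcongr
      have hW := mul_le_mul_of_nonneg_left hU (Nat.cast_nonneg (α := ℝ) #W)
      rw [card_product]
      push_cast
      linarith
    _ = _ := by rw [Real.exp_nat_mul]

/-- The `2 * #M` edges of the paths are disjoint from the pairs that witness the deficiency once
the endpoints of `M` are removed from the block. -/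
lemma measureReal_forall_path_le [Finite ι] {i : ι} {a : A} {M : Finset (A × B)}
    (hblock : D + y ≤ ν.real {some i} * (#{b | lab b = some i} - #M) / 2)
    (hfst : Set.InjOn Prod.fst (M : Set (A × B))) (hsnd : Set.InjOn Prod.snd (M : Set (A × B)))
    (ha : ∀ e ∈ M, e.1 ≠ a) :
    (Measure.pi fun _ : A × B => ν).real
        {f | ∀ e ∈ M, f (a, e.2) ≠ none ∧ f e ≠ none ∧ blockDegree lab f i e.1 < D} ≤
      (ν.real {none}ᶜ ^ 2 * Real.exp (-y)) ^ #M := by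
  classical
  let F := M ∪ {a} ×ˢ M.image Prod.snd
  let U := ({b | lab b = some i} : Finset B) \ M.image Prod.snd
  have hF : #F = 2 * #M := by
    rw [card_union_of_disjoint, card_product, card_singleton, card_image_of_injOn hsnd]
    · ring
    · exact disjoint_left.2 fun e he he' => ha e he (by simpa using (mem_product.1 he').1)
  have hdisj : Disjoint F (M.image Prod.fst ×ˢ U) := by
    refine disjoint_left.2 fun e he he' => (mem_sdiff.1 (mem_product.1 he').2).2 ?_
    rcases mem_union.1 he with he | he
    · exact mem_image_of_mem _ he
    · exact (mem_product.1 he).2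
  have hU : D + y ≤ ν.real {some i} * #U / 2 := by
    refine hblock.trans ?_
    gcongr
    rw [sub_le_iff_le_add, ← card_image_of_injOn hsnd]
    exact_mod_cast card_le_card_sdiff_add_card
  have hle := measureReal_forall_ne_none_and_blockDegree_lt_le ν hdisj
    (fun b hb => by simpa using (mem_sdiff.1 hb).1) hU
  rw [hF, card_image_of_injOn hfst, pow_mul, ← mul_pow] at hle
  refine hle.trans' <| measureReal_mono fun f hf => ⟨fun e he => ?_, fun v hv => ?_⟩
  · rcases mem_union.1 he with he | he
    · exact (hf e he).2.1
    · obtain ⟨v, w⟩ := e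
      obtain ⟨rfl, hw⟩ : v = a ∧ w ∈ M.image Prod.snd := by
        simpa only [mem_product, mem_singleton] using he
      obtain ⟨e', he', rfl⟩ := mem_image.1 hw
      exact (hf e' he').1
  · obtain ⟨e, he, rfl⟩ := mem_image.1 hv
    exact (hf e he).2.2

variable [Fintype ι]

lemma mul_measureReal_not_hasFewDeficientVertices_le
    (hblock : ∀ i, D + y ≤ ν.real {some i} * #{b | lab b = some i} / 2) (X : ℝ) :
    X * (Measure.pi fun _ : A × B => ν).real {f | ¬ HasFewDeficientVertices lab D X f} ≤
      Fintype.card A * (Fintype.card ι * Real.exp (-y)) := by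
  classical
  set μ := Measure.pi fun _ : A × B => ν
  rcases lt_or_ge X 0 with hX | hX
  · exact (mul_nonpos_of_nonpos_of_nonneg hX.le measureReal_nonneg).trans (by positivity)
  have hdef (a : A) : μ.real {f | IsDeficient lab D f a} ≤ Fintype.card ι * Real.exp (-y) := by
    calc μ.real {f | IsDeficient lab D f a}
        = μ.real {f | ∃ i ∈ univ, blockDegree lab f i a < D} := by simp [IsDeficient]
      _ ≤ #(univ : Finset ι) * Real.exp (-y) :=
        measureReal_exists_mem_le_card_mul μ _ _ fun i _ => by
          simpa using measureReal_forall_ne_none_and_blockDegree_lt_le ν (W := {a})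
            (disjoint_empty_left _) (fun b hb => (mem_filter.1 hb).2) (hblock i)
  calc _ ≤ X * μ.real {f | X ≤ #{a | IsDeficient lab D f a}} := by
        refine mul_le_mul_of_nonneg_left (measureReal_mono fun f hf => ?_) hX
        simp only [HasFewDeficientVertices, Set.mem_ofPred_eq, not_forall, not_lt] at hf
        obtain ⟨W, hW, hXW⟩ := hf
        exact hXW.trans <| Nat.cast_le.2 <| card_le_card fun a ha => by simpa using hW a ha
    _ ≤ ∑ a, μ.real {f | IsDeficient lab D f a} :=
      mul_measureReal_le_card_filter_le_sum μ univ (fun a f => IsDeficient lab D f a) X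
    _ ≤ _ := (sum_le_card_nsmul univ _ _ fun a _ => hdef a).trans_eq (nsmul_eq_mul _ _)

lemma measureReal_not_hasFewDeficientNeighbors_le
    (hblock : ∀ i, D + y ≤ ν.real {some i} * (#{b | lab b = some i} - 1) / 2) (t : ℕ) :
    (Measure.pi fun _ : A × B => ν).real {f | ¬ HasFewDeficientNeighbors lab D t f} ≤
      Fintype.card ι * Fintype.card B *
        (Fintype.card A * (ν.real {none}ᶜ * Real.exp (-y))) ^ t := by
  classical
  set μ := Measure.pi fun _ : A × B => ν
  set p := ν.real {none}ᶜ
  let Bad (x : ι × B × Finset A) (f : A × B → Option ι) : Prop :=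
    ∀ a ∈ x.2.2, f (a, x.2.1) ≠ none ∧ blockDegree lab f x.1 a < D
  let I : Finset (ι × B × Finset A) := univ ×ˢ univ ×ˢ powersetCard t univ
  have hbad : ∀ x ∈ I, μ.real {f | Bad x f} ≤ (p * Real.exp (-y)) ^ t := by
    rintro ⟨i, b, W⟩ hW
    obtain rfl : #W = t := by simpa [I] using hW
    have hdisj : Disjoint (W ×ˢ {b}) (W ×ˢ ({b | lab b = some i} : Finset B).erase b) :=
      disjoint_product.2 (.inr (by simp))
    have hU : D + y ≤ ν.real {some i} * #(({b | lab b = some i} : Finset B).erase b) / 2 := by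
      refine (hblock i).trans ?_
      gcongr
      rw [sub_le_iff_le_add]
      exact_mod_cast Nat.sub_le_iff_le_add.1 pred_card_le_card_erase
    have hle := measureReal_forall_ne_none_and_blockDegree_lt_le ν hdisj
      (fun b hb => by simpa using mem_of_mem_erase hb) hU
    rw [card_product, card_singleton, mul_one, ← mul_pow] at hle
    exact hle.trans' <| measureReal_mono fun f hf =>
      ⟨by simpa using fun a ha => (hf a ha).1, fun a ha => (hf a ha).2⟩
  have hcard : (#I : ℝ) ≤ Fintype.card ι * Fintype.card B * Fintype.card A ^ t := by
    simp only [I, card_product, card_powersetCard, card_univ, ← mul_assoc]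
    exact_mod_cast Nat.mul_le_mul_left _ (Nat.choose_le_pow _ _)
  calc _ ≤ μ.real {f | ∃ x ∈ I, Bad x f} := by
        refine measureReal_mono fun f hf => ?_
        simp only [HasFewDeficientNeighbors, Set.mem_ofPred_eq, not_forall, not_lt] at hf
        obtain ⟨i, b, W, hW, htW⟩ := hf
        obtain ⟨W', hW', rfl⟩ := exists_subset_card_eq htW
        exact ⟨(i, b, W'), by simp [I], fun a ha => hW a (hW' ha)⟩
    _ ≤ #I * (p * Real.exp (-y)) ^ t := measureReal_exists_mem_le_card_mul μ I Bad hbad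
    _ ≤ Fintype.card ι * Fintype.card B * Fintype.card A ^ t * (p * Real.exp (-y)) ^ t := by
      gcongr
    _ = _ := by rw [mul_assoc, ← mul_pow]

lemma measureReal_not_hasFewDeficientPaths_le
    (hblock : ∀ i, D + y ≤ ν.real {some i} * (#{b | lab b = some i} - t) / 2) :
    (Measure.pi fun _ : A × B => ν).real {f | ¬ HasFewDeficientPaths lab D t f} ≤
      Fintype.card ι * Fintype.card A *
        (Fintype.card A * Fintype.card B * (ν.real {none}ᶜ ^ 2 * Real.exp (-y))) ^ t := by
  set μ := Measure.pi fun _ : A × B => ν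
  set z := ν.real {none}ᶜ ^ 2 * Real.exp (-y)
  let Bad (x : ι × A × Finset (A × B)) (f : A × B → Option ι) : Prop :=
    (Set.InjOn Prod.fst (x.2.2 : Set (A × B)) ∧ Set.InjOn Prod.snd (x.2.2 : Set (A × B)) ∧
      ∀ e ∈ x.2.2, e.1 ≠ x.2.1) ∧
    ∀ e ∈ x.2.2, f (x.2.1, e.2) ≠ none ∧ f e ≠ none ∧ blockDegree lab f x.1 e.1 < D
  let I : Finset (ι × A × Finset (A × B)) := univ ×ˢ univ ×ˢ powersetCard t univ
  have hbad : ∀ x ∈ I, μ.real {f | Bad x f} ≤ z ^ t := by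
    rintro ⟨i, a, M⟩ hM
    obtain rfl : #M = t := by simpa [I] using hM
    by_cases h : Set.InjOn Prod.fst (M : Set (A × B)) ∧ Set.InjOn Prod.snd (M : Set (A × B)) ∧
      ∀ e ∈ M, e.1 ≠ a
    · exact (measureReal_mono fun f hf => hf.2).trans
        (measureReal_forall_path_le ν (hblock i) h.1 h.2.1 h.2.2)
    · have hz : 0 ≤ z ^ #M := by positivity
      simpa only [Bad, h, false_and, Set.ofPred_false, measureReal_empty]
  have hcard : (#I : ℝ) ≤
      Fintype.card ι * Fintype.card A * (Fintype.card A * Fintype.card B) ^ t := by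
    simp only [I, card_product, card_powersetCard, card_univ, ← mul_assoc, Fintype.card_prod]
    exact_mod_cast Nat.mul_le_mul_left _ (Nat.choose_le_pow _ _)
  calc _ ≤ μ.real {f | ∃ x ∈ I, Bad x f} := by
        refine measureReal_mono fun f hf => ?_
        simp only [HasFewDeficientPaths, Set.mem_ofPred_eq, not_forall, not_lt] at hf
        obtain ⟨i, a, M, hfst, hsnd, hM, htM⟩ := hf
        obtain ⟨M', hM', rfl⟩ := exists_subset_card_eq htM
        have hsub : (M' : Set (A × B)) ⊆ M := coe_subset.2 hM'
        exact ⟨(i, a, M'), by simp [I], ⟨hfst.mono hsub, hsnd.mono hsub, fun e he =>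
          (hM e (hM' he)).1⟩, fun e he => (hM e (hM' he)).2⟩
    _ ≤ #I * z ^ t := measureReal_exists_mem_le_card_mul μ I Bad hbad
    _ ≤ Fintype.card ι * Fintype.card A * (Fintype.card A * Fintype.card B) ^ t * z ^ t := by
      gcongr
    _ = _ := by rw [mul_assoc, ← mul_pow]

end Deficiency

section TightHallViolator

variable [Finite ι] [DecidableEq B]

lemma measureReal_tight_hall_violator_le (hp : 0 < ν.real {none}ᶜ) {r : ℕ} {S : Finset A}
    {T : Finset B} (hS : #S = r + 1) (hT : #T = r) :
    (Measure.pi fun _ : A × B => ν).real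
        {f | edgesBetween f S Tᶜ = ∅ ∧ 2 * #T ≤ #(edgesBetween f S T)} ≤
      (Real.exp 1 * (ν.real {none}ᶜ * (r + 1)) ^ 2) ^ r *
        Real.exp (-(ν.real {none}ᶜ * ((r + 1) * (Fintype.card B - r)))) := by
  set u := ν.real {none}ᶜ * (r + 1) with hu
  have hu₀ : 0 < u := by positivity
  have hTc : (#Tᶜ : ℝ) = Fintype.card B - r := by
    rw [card_compl, Nat.cast_sub (card_le_univ T), hT]
  have htail {l : ℝ} (hl : 0 ≤ l) :
      (Measure.pi fun _ : A × B => ν).real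
        {f | edgesBetween f S Tᶜ = ∅ ∧ 2 * #T ≤ #(edgesBetween f S T)} ≤
      Real.exp (u * (Real.exp l - 1) * r - l * (2 * r)) *
        Real.exp (-(ν.real {none}ᶜ * ((r + 1) * (Fintype.card B - r)))) := by
    have hle := measureReal_edgesBetween_eq_empty_and_le_card_le ν hl ((2 * #T : ℕ) : ℝ) S
      (disjoint_compl_left (a := T))
    simp only [Nat.cast_le] at hle
    refine hle.trans_eq ?_
    rw [hTc, hS, hT, ← Real.exp_add, hu]
    push_cast
    ring_nf
  rcases le_or_gt u 1 with hu₁ | hu₁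
  · refine (htail (l := -Real.log u) (neg_nonneg.2 (Real.log_nonpos hu₀.le hu₁))).trans ?_
    gcongr
    have hexponent : u * (Real.exp (-Real.log u) - 1) * r - -Real.log u * (2 * r) ≤
        r * (1 + 2 * Real.log u) := by
      rw [Real.exp_neg, Real.exp_log hu₀, mul_sub, mul_inv_cancel₀ hu₀.ne']
      have : 0 ≤ u * r := by positivity
      linarith
    calc _ ≤ Real.exp (r * (1 + 2 * Real.log u)) := Real.exp_le_exp.2 hexponent
      _ = _ := by
        rw [Real.exp_nat_mul, Real.exp_add, two_mul, Real.exp_add, Real.exp_log hu₀, sq]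
  · refine (htail le_rfl).trans ?_
    gcongr
    have hbase : 1 ≤ Real.exp 1 * u ^ 2 :=
      one_le_mul_of_one_le_of_one_le (Real.one_le_exp zero_le_one) (one_le_pow₀ hu₁.le)
    simpa using one_le_pow₀ (n := r) hbase

lemma measureReal_exists_tight_hall_violator_le (hp : 0 < ν.real {none}ᶜ)
    (hcard : Fintype.card A = Fintype.card B) {r : ℕ} (hr : r + 1 ≤ Fintype.card B / (4 : ℝ)) :
    (Measure.pi fun _ : A × B => ν).real
        {f | ∃ x ∈ powersetCard (r + 1) univ ×ˢ powersetCard r univ,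
          edgesBetween f x.1 x.2ᶜ = ∅ ∧ 2 * #x.2 ≤ #(edgesBetween f x.1 x.2)} ≤
      Real.exp 2 * Fintype.card B * Real.exp (-(Fintype.card B * ν.real {none}ᶜ)) *
        (Real.exp 3 * (Fintype.card B * ν.real {none}ᶜ) ^ 2 *
          Real.exp (-(3 / 4 * (Fintype.card B * ν.real {none}ᶜ)))) ^ r := by
  set p := ν.real {none}ᶜ
  set n := Fintype.card B
  have hdecay : Real.exp (-(p * ((r + 1) * (n - r)))) ≤
      Real.exp (-(n * p)) * Real.exp (-(3 / 4 * (n * p))) ^ r := by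
    rw [← Real.exp_nat_mul, ← Real.exp_add, Real.exp_le_exp]
    have hpairs : n + r * (3 / 4 * n) ≤ (r + 1) * (n - r : ℝ) := by
      linarith [mul_le_mul_of_nonneg_left hr (Nat.cast_nonneg (α := ℝ) r)]
    linarith [mul_le_mul_of_nonneg_left hpairs hp.le]
  have hthree : Real.exp 3 = Real.exp 2 * Real.exp 1 := by rw [← Real.exp_add]; norm_num
  calc _ ≤ #(powersetCard (r + 1) (univ : Finset A) ×ˢ powersetCard r (univ : Finset B)) *
        ((Real.exp 1 * (p * (r + 1)) ^ 2) ^ r * Real.exp (-(p * ((r + 1) * (n - r))))) := by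
        refine measureReal_exists_mem_le_card_mul _ _ _ fun x hx => ?_
        simp only [mem_product, mem_powersetCard_univ] at hx
        exact measureReal_tight_hall_violator_le ν hp hx.1 hx.2
    _ = n.choose (r + 1) * n.choose r * ((r + 1) ^ r) ^ 2 *
        ((Real.exp 1 * p ^ 2) ^ r * Real.exp (-(p * ((r + 1) * (n - r))))) := by
      rw [card_product, card_powersetCard, card_powersetCard, card_univ, card_univ, hcard]
      push_cast
      generalize (r + 1 : ℝ) = s
      ring
    _ ≤ Real.exp 2 * n * (Real.exp 2 * n ^ 2) ^ r *
        ((Real.exp 1 * p ^ 2) ^ r * (Real.exp (-(n * p)) * Real.exp (-(3 / 4 * (n * p))) ^ r)) := by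
      have hchoose := choose_succ_mul_choose_mul_le n r
      gcongr
    _ = _ := by
      rw [hthree]
      ring

lemma measureReal_not_hasNoTightHallViolator_le {K : ℝ} (hp : 0 < ν.real {none}ᶜ)
    (hcard : Fintype.card A = Fintype.card B) (hK : K ≤ Fintype.card B / 4)
    (hx : Real.exp 3 * (Fintype.card B * ν.real {none}ᶜ) ^ 2 *
      Real.exp (-(3 / 4 * (Fintype.card B * ν.real {none}ᶜ))) ≤ 1 / 2) :
    (Measure.pi fun _ : A × B => ν).real {f | ¬ HasNoTightHallViolator K f} ≤
      2 * (Real.exp 2 * Fintype.card B * Real.exp (-(Fintype.card B * ν.real {none}ᶜ))) := by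
  set μ := Measure.pi fun _ : A × B => ν
  set n := Fintype.card B
  set d := n * ν.real {none}ᶜ
  set x := Real.exp 3 * d ^ 2 * Real.exp (-(3 / 4 * d))
  let Violates (r : ℕ) (f : A × B → Option ι) : Prop :=
    ∃ x ∈ powersetCard (r + 1) univ ×ˢ powersetCard r univ,
      edgesBetween f x.1 x.2ᶜ = ∅ ∧ 2 * #x.2 ≤ #(edgesBetween f x.1 x.2)
  have hsub : {f | ¬ HasNoTightHallViolator K f} ⊆
      {f | ∃ r ∈ range ⌊K⌋₊, Violates r f} := by
    intro f hf
    simp only [HasNoTightHallViolator, Set.mem_ofPred_eq, not_forall, not_lt] at hf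
    obtain ⟨S, T, hSK, hTS, hempty, hedges⟩ := hf
    refine ⟨#T, ?_, (S, T), by simp [hTS], hempty, hedges⟩
    rw [mem_range, ← Nat.add_one_le_iff, Nat.le_floor_iff' (Nat.succ_ne_zero _)]
    exact_mod_cast hTS ▸ hSK
  calc _ ≤ μ.real {f | ∃ r ∈ range ⌊K⌋₊, Violates r f} :=
        measureReal_mono hsub
    _ ≤ ∑ r ∈ range ⌊K⌋₊, μ.real {f | Violates r f} :=
      measureReal_exists_mem_le_sum μ _ _
    _ ≤ ∑ r ∈ range ⌊K⌋₊, Real.exp 2 * n * Real.exp (-d) * (1 / 2) ^ r := by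
      refine sum_le_sum fun r hr => ?_
      have hrK : ((r + 1 : ℕ) : ℝ) ≤ K :=
        (Nat.le_floor_iff' (Nat.succ_ne_zero _)).1 (mem_range.1 hr)
      refine (measureReal_exists_tight_hall_violator_le ν hp hcard (by
        exact_mod_cast hrK.trans hK)).trans ?_
      gcongr
    _ ≤ Real.exp 2 * n * Real.exp (-d) * 2 := by
      rw [← mul_sum]
      gcongr
      exact sum_geometric_two_le _
    _ = _ := mul_comm _ _

end TightHallViolator

end FailureBounds

section WithHighProbability

variable {Ω : ℕ → Type*} [∀ n, MeasurableSpace (Ω n)] {μ : ∀ n, Measure (Ω n)}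
  {P Q : ∀ n, Ω n → Prop}

/-- The events `P n` hold with high probability under the finite measures `μ n`: the measure of
their complements tends to zero. -/
def WithHighProbability (μ : ∀ n, Measure (Ω n)) (P : ∀ n, Ω n → Prop) : Prop :=
  Tendsto (fun n => (μ n).real {ω | ¬ P n ω}) atTop (nhds 0)

lemma withHighProbability_of_measureReal_le {g : ℕ → ℝ}
    (hle : ∀ᶠ n in atTop, (μ n).real {ω | ¬ P n ω} ≤ g n) (hg : Tendsto g atTop (nhds 0)) :
    WithHighProbability μ P :=
  squeeze_zero' (.of_forall fun _ => measureReal_nonneg) hle hg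

namespace WithHighProbability

lemma and (hP : WithHighProbability μ P) (hQ : WithHighProbability μ Q) :
    WithHighProbability μ fun n ω => P n ω ∧ Q n ω := by
  refine withHighProbability_of_measureReal_le (.of_forall fun n => ?_)
    (by simpa using Tendsto.add hP hQ)
  simp only [not_and_or, Set.ofPred_or]
  exact measureReal_union_le _ _

lemma mono [∀ n, IsFiniteMeasure (μ n)] (hP : WithHighProbability μ P)
    (hPQ : ∀ᶠ n in atTop, ∀ ω, P n ω → Q n ω) :
    WithHighProbability μ Q :=
  withHighProbability_of_measureReal_le
    (hPQ.mono fun _ h => measureReal_mono fun ω => mt (h ω)) hP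

lemma tendsto_measure [∀ n, DiscreteMeasurableSpace (Ω n)] [∀ n, IsProbabilityMeasure (μ n)]
    (hP : WithHighProbability μ P) :
    Tendsto (fun n => μ n {ω | P n ω}) atTop (nhds 1) := by
  have hcompl (n : ℕ) : μ n {ω | P n ω} = ENNReal.ofReal (1 - (μ n).real {ω | ¬ P n ω}) := by
    rw [← probReal_compl_eq_one_sub .of_discrete, ofReal_measureReal]
    simp [Set.compl_ofPred]
  simp only [hcompl]
  simpa using ENNReal.tendsto_ofReal (hP.const_sub 1)

end WithHighProbability

end WithHighProbability

section Limits

lemma tendsto_pow_mul_exp_neg_mul_atTop {κ : ℝ} (hκ : 0 < κ) (k : ℕ) :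
    Tendsto (fun x : ℝ => x ^ k * Real.exp (-(κ * x))) atTop (nhds 0) := by
  simpa using tendsto_rpow_mul_exp_neg_mul_atTop_nhds_zero k κ hκ

variable {d : ℕ → ℝ} (hd : Tendsto (fun n : ℕ => d n - Real.log n) atTop atTop)
include hd

lemma tendsto_atTop_of_tendsto_sub_log : Tendsto d atTop atTop := by
  refine tendsto_atTop_mono (fun n => ?_) hd
  linarith [Real.log_natCast_nonneg n]

lemma tendsto_natCast_mul_exp_neg : Tendsto (fun n : ℕ => n * Real.exp (-d n)) atTop (nhds 0) := by
  refine (Real.tendsto_exp_neg_atTop_nhds_zero.comp hd).congr' ?_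
  filter_upwards [eventually_gt_atTop 0] with n hn
  rw [Function.comp_apply, neg_sub, sub_eq_add_neg, Real.exp_add, Real.exp_log (by positivity)]

lemma tendsto_natCast_mul_pow_mul_exp_neg_pow {κ : ℝ} {t : ℕ} (ht : 2 ≤ κ * t) (k : ℕ) :
    Tendsto (fun n : ℕ => n * (d n ^ k * Real.exp (-(κ * d n))) ^ t) atTop (nhds 0) := by
  have hd_atTop := tendsto_atTop_of_tendsto_sub_log hd
  have hprod := (tendsto_natCast_mul_exp_neg hd).mul
    ((tendsto_pow_mul_exp_neg_mul_atTop one_pos (k * t)).comp hd_atTop)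
  rw [mul_zero] at hprod
  refine squeeze_zero' ?_ ?_ hprod
  all_goals filter_upwards [hd_atTop.eventually_ge_atTop 0] with n hn
  · positivity
  · have hexp : Real.exp (-(κ * d n)) ^ t ≤ Real.exp (-d n) * Real.exp (-(1 * d n)) := by
      rw [← Real.exp_nat_mul, ← Real.exp_add, Real.exp_le_exp]
      linarith [mul_le_mul_of_nonneg_right ht hn]
    calc n * (d n ^ k * Real.exp (-(κ * d n))) ^ t
        = n * d n ^ (k * t) * Real.exp (-(κ * d n)) ^ t := by ring
      _ ≤ n * d n ^ (k * t) * (Real.exp (-d n) * Real.exp (-(1 * d n))) := by gcongr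
      _ = _ := by rw [Function.comp_apply]; ring

end Limits

lemma exists_labelling_linear_card {ι : Type*} [Fintype ι] [DecidableEq ι] {b : ℝ} (hb : 0 < b)
    (hbι : Fintype.card ι * b ≤ 1) : ∃ lab : ∀ n, Fin n → Option ι,
      (∀ n i, #{v | lab n v = some i} ≤ b * n) ∧
      ∀ᶠ n : ℕ in atTop, ∀ i, b / 2 * n ≤ #{v | lab n v = some i} := by
  have hfit (n : ℕ) : Fintype.card ι * ⌊b * n⌋₊ ≤ Fintype.card (Fin n) := by
    rw [Fintype.card_fin, ← Nat.cast_le (α := ℝ)]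
    push_cast
    calc (Fintype.card ι * ⌊b * n⌋₊ : ℝ) ≤ Fintype.card ι * (b * n) := by
          gcongr
          exact Nat.floor_le (by positivity)
      _ = Fintype.card ι * b * n := by ring
      _ ≤ n := mul_le_of_le_one_left n.cast_nonneg hbι
  choose lab hlab using fun n => exists_labelling_card_eq (hfit n)
  refine ⟨lab, fun n i => ?_, ?_⟩
  · rw [hlab]
    exact Nat.floor_le (by positivity)
  · filter_upwards [(tendsto_natCast_atTop_atTop.const_mul_atTop
      (half_pos hb)).eventually_ge_atTop (1 : ℝ)] with n hn i
    rw [hlab]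
    linarith [Nat.lt_floor_add_one (b * n)]

section RandomBipartite

variable {ι : Type*} [MeasurableSpace (Option ι)]

/-- The random colored bipartite graph on two copies of `Fin n` whose pairs have independent states
distributed according to `ν n`. -/
noncomputable abbrev randomBipartite (ν : ℕ → Measure (Option ι)) (n : ℕ) :
    Measure (Fin n × Fin n → Option ι) :=
  Measure.pi fun _ => ν n

/-- The expected degree of a vertex of `randomBipartite ν n`. -/
noncomputable def meanDegree (ν : ℕ → Measure (Option ι)) (n : ℕ) : ℝ :=
  n * (ν n).real {none}ᶜ

variable [DiscreteMeasurableSpace (Option ι)] {ν : ℕ → Measure (Option ι)}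
  [∀ n, IsProbabilityMeasure (ν n)]

lemma WithHighProbability.swap [Finite ι] {P : ∀ n, (Fin n × Fin n → Option ι) → Prop}
    (hP : WithHighProbability (randomBipartite ν) P) :
    WithHighProbability (randomBipartite ν) fun n f => P n (f ∘ Prod.swap) := by
  refine Tendsto.congr (fun n => ?_) hP
  have hswap : MeasurePreserving (fun f : Fin n × Fin n → Option ι => f ∘ Prod.swap)
      (randomBipartite ν n) (randomBipartite ν n) :=
    measurePreserving_arrowCongr' (fun _ => ν n) (fun _ => ν n) (Equiv.prodComm (Fin n) (Fin n))
      (MeasurableEquiv.refl _) fun _ => .id _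
  exact (hswap.measureReal_preimage
    (MeasurableSet.of_discrete (s := {f | ¬ P n f})).nullMeasurableSet).symm

variable (hd : Tendsto (fun n => meanDegree ν n - Real.log n) atTop atTop)
include hd

lemma withHighProbability_isColorSpread [Finite ι] {r δ : ℝ} (hr : 0 < r)
    (hν : ∀ n i, r * (ν n).real {none}ᶜ ≤ (ν n).real {some i}) (hδ : 0 < δ) :
    WithHighProbability (randomBipartite ν) fun n f => IsColorSpread (δ * n) f := by
  have := Fintype.ofFinite ι
  have hlim : Tendsto (fun n : ℕ => Fintype.card ι * Real.exp (-n)) atTop (nhds 0) := by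
    simpa using (Real.tendsto_exp_neg_atTop_nhds_zero.comp tendsto_natCast_atTop_atTop).const_mul
      (Fintype.card ι : ℝ)
  refine withHighProbability_of_measureReal_le ?_ hlim
  have hlarge := ((tendsto_atTop_of_tendsto_sub_log hd).const_mul_atTop
    (show 0 < r * δ ^ 2 by positivity)).eventually_ge_atTop (2 * Real.log 2 + 1)
  filter_upwards [hlarge] with n hn
  have htwo : (2 ^ n : ℝ) = Real.exp (n * Real.log 2) := by
    rw [Real.exp_nat_mul, Real.exp_log two_pos]
  refine (measureReal_not_isColorSpread_le (ν n) (by positivity) (hν n)).trans ?_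
  rw [Fintype.card_fin, htwo, mul_assoc, ← Real.exp_add, ← Real.exp_add]
  gcongr
  have := mul_le_mul_of_nonneg_left hn n.cast_nonneg
  rw [meanDegree] at this
  linarith

/-- With `l = 5 / c`, the hypothesis on `δ` gives `d * exp l * δ + 4 * d ≤ l * (c * d)` for the mean
degree `d`. -/
lemma withHighProbability_isLocallySparse [Finite ι] {c δ : ℝ} (hc : 0 < c)
    (hδ : δ ≤ Real.exp (-(5 / c))) :
    WithHighProbability (randomBipartite ν) fun n f =>
      IsLocallySparse (δ * n) (c * meanDegree ν n) f := by
  have hzero : Tendsto (fun n : ℕ => n * Real.exp (-(2 * meanDegree ν n))) atTop (nhds 0) := by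
    simpa using tendsto_natCast_mul_pow_mul_exp_neg_pow hd (κ := 2) (t := 1) (by norm_num) 0
  have hexp := (Real.continuous_exp.tendsto 0).comp hzero
  have hlim := (hexp.sub_const 1).mul hexp
  rw [Real.exp_zero, sub_self, zero_mul] at hlim
  refine withHighProbability_of_measureReal_le ?_ hlim
  filter_upwards [(tendsto_atTop_of_tendsto_sub_log hd).eventually_ge_atTop 0] with n hn
  have hsparse : (ν n).real {none}ᶜ * Real.exp (5 / c) * (δ * n) + 2 * (2 * meanDegree ν n) ≤
      5 / c * (c * meanDegree ν n) := by
    have hδ' : Real.exp (5 / c) * δ ≤ 1 := by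
      rwa [Real.exp_neg, ← one_div, le_div_iff₀' (Real.exp_pos _)] at hδ
    have := mul_le_mul_of_nonneg_right hδ' hn
    have hcancel : 5 / c * (c * meanDegree ν n) = 5 * meanDegree ν n := by field_simp
    rw [hcancel]
    unfold meanDegree at *
    linarith
  have hpow : (1 + Real.exp (-(2 * meanDegree ν n))) ^ n ≤
      Real.exp (n * Real.exp (-(2 * meanDegree ν n))) := by
    rw [Real.exp_nat_mul, add_comm]
    gcongr
    exact Real.add_one_le_exp _
  refine (measureReal_not_isLocallySparse_le (ν n) (by positivity) (by positivity) hsparse).trans ?_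
  simp only [Fintype.card_fin, Function.comp_apply]
  gcongr
  exact sub_nonneg.2 (Real.one_le_exp (by positivity))

lemma withHighProbability_hasNoTightHallViolator [Finite ι] {δ : ℝ} (hδ : δ ≤ 1 / 4) :
    WithHighProbability (randomBipartite ν) fun n f => HasNoTightHallViolator (δ * n) f := by
  have hd_atTop := tendsto_atTop_of_tendsto_sub_log hd
  have hlim : Tendsto (fun n : ℕ => 2 * (Real.exp 2 * (n * Real.exp (-meanDegree ν n))))
      atTop (nhds 0) := by
    simpa using ((tendsto_natCast_mul_exp_neg hd).const_mul (Real.exp 2)).const_mul 2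
  have hratio : Tendsto (fun n => Real.exp 3 * (meanDegree ν n ^ 2 *
      Real.exp (-(3 / 4 * meanDegree ν n)))) atTop (nhds 0) := by
    simpa using ((tendsto_pow_mul_exp_neg_mul_atTop (κ := 3 / 4) (by norm_num) 2).comp
      hd_atTop).const_mul (Real.exp 3)
  refine withHighProbability_of_measureReal_le ?_ hlim
  filter_upwards [hd_atTop.eventually_gt_atTop 0, hratio.eventually_le_const one_half_pos]
    with n hn hx
  have hp : 0 < (ν n).real {none}ᶜ := pos_of_mul_pos_right hn n.cast_nonneg
  have hle := measureReal_not_hasNoTightHallViolator_le (ν n) (A := Fin n) (B := Fin n)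
    (K := δ * n) hp rfl
    (by rw [Fintype.card_fin]; linarith [mul_le_mul_of_nonneg_right hδ n.cast_nonneg])
    (by rwa [Fintype.card_fin, ← meanDegree, mul_assoc])
  rwa [Fintype.card_fin, ← meanDegree, mul_assoc (Real.exp 2)] at hle

section Blocks

variable [Finite ι] [DecidableEq ι] {lab : ∀ n, Fin n → Option ι} {κ : ℝ} {t : ℕ}

lemma withHighProbability_hasFewDeficientVertices (hκ : 0 < κ) {x : ℝ} (hx : 0 < x)
    (hblock : ∀ᶠ n in atTop, ∀ i, 2 * (κ * meanDegree ν n) ≤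
      (ν n).real {some i} * #{v | lab n v = some i} / 2) :
    WithHighProbability (randomBipartite ν) fun n f =>
      HasFewDeficientVertices (lab n) (κ * meanDegree ν n) (x * n) f := by
  have := Fintype.ofFinite ι
  have hlim : Tendsto (fun n => Fintype.card ι / x * Real.exp (-(κ * meanDegree ν n)))
      atTop (nhds 0) := by
    simpa using ((tendsto_pow_mul_exp_neg_mul_atTop hκ 0).comp
      (tendsto_atTop_of_tendsto_sub_log hd)).const_mul (Fintype.card ι / x)
  refine withHighProbability_of_measureReal_le ?_ hlim
  filter_upwards [hblock, eventually_gt_atTop 0] with n hn hn₀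
  have hmarkov := mul_measureReal_not_hasFewDeficientVertices_le (ν n) (A := Fin n)
    (lab := lab n) (D := κ * meanDegree ν n) (y := κ * meanDegree ν n)
    (fun i => by rw [← two_mul]; exact hn i) (x * n)
  rw [Fintype.card_fin] at hmarkov
  rw [div_mul_eq_mul_div, le_div_iff₀ hx]
  refine le_of_mul_le_mul_left ?_ (Nat.cast_pos.2 hn₀ : (0 : ℝ) < n)
  linarith

lemma withHighProbability_hasFewDeficientNeighbors (ht : 2 ≤ κ * t)
    (hblock : ∀ᶠ n in atTop, ∀ i, 2 * (κ * meanDegree ν n) ≤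
      (ν n).real {some i} * (#{v | lab n v = some i} - 1) / 2) :
    WithHighProbability (randomBipartite ν) fun n f =>
      HasFewDeficientNeighbors (lab n) (κ * meanDegree ν n) t f := by
  have := Fintype.ofFinite ι
  have hlim : Tendsto (fun n : ℕ => Fintype.card ι *
      (n * (meanDegree ν n ^ 1 * Real.exp (-(κ * meanDegree ν n))) ^ t)) atTop (nhds 0) := by
    simpa using (tendsto_natCast_mul_pow_mul_exp_neg_pow hd ht 1).const_mul (Fintype.card ι : ℝ)
  refine withHighProbability_of_measureReal_le ?_ hlim
  filter_upwards [hblock] with n hn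
  have hle := measureReal_not_hasFewDeficientNeighbors_le (ν n) (A := Fin n) (lab := lab n)
    (D := κ * meanDegree ν n) (y := κ * meanDegree ν n)
    (fun i => by rw [← two_mul]; exact hn i) t
  rw [Fintype.card_fin] at hle
  refine hle.trans_eq ?_
  rw [← mul_assoc (n : ℝ), ← meanDegree, pow_one, mul_assoc]

lemma withHighProbability_hasFewDeficientPaths (ht : 2 ≤ κ * t)
    (hblock : ∀ᶠ n in atTop, ∀ i, 2 * (κ * meanDegree ν n) ≤
      (ν n).real {some i} * (#{v | lab n v = some i} - t) / 2) :
    WithHighProbability (randomBipartite ν) fun n f =>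
      HasFewDeficientPaths (lab n) (κ * meanDegree ν n) t f := by
  have := Fintype.ofFinite ι
  have hlim : Tendsto (fun n : ℕ => Fintype.card ι *
      (n * (meanDegree ν n ^ 2 * Real.exp (-(κ * meanDegree ν n))) ^ t)) atTop (nhds 0) := by
    simpa using (tendsto_natCast_mul_pow_mul_exp_neg_pow hd ht 2).const_mul (Fintype.card ι : ℝ)
  refine withHighProbability_of_measureReal_le ?_ hlim
  filter_upwards [hblock] with n hn
  have hle := measureReal_not_hasFewDeficientPaths_le (ν n) (A := Fin n) (lab := lab n) (t := t)
    (D := κ * meanDegree ν n) (y := κ * meanDegree ν n)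
    (fun i => by rw [← two_mul]; exact hn i)
  rw [Fintype.card_fin] at hle
  refine hle.trans_eq ?_
  rw [meanDegree]
  ring

end Blocks

/-- A quarter of the linear block size is spent on the threshold `κ * meanDegree ν n`, the rest
leaves room for the tail bounds and for removing `t` vertices from a block. -/
lemma exists_withHighProbability_isPseudorandom [Fintype ι] [Nonempty ι] [DecidableEq ι]
    {r b x : ℝ} (hr : 0 < r) (hν : ∀ n i, r * (ν n).real {none}ᶜ ≤ (ν n).real {some i})
    (hb : 0 < b) (hx : 0 < x) {lab : ∀ n, Fin n → Option ι}
    (hlab : ∀ᶠ n : ℕ in atTop, ∀ i, b * n ≤ #{v | lab n v = some i}) :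
    ∃ δ > 0, ∃ κ > 0, ∃ t : ℕ, WithHighProbability (randomBipartite ν) fun n f =>
      IsPseudorandom (lab n) (δ * n) (κ * meanDegree ν n) (x * n) t f := by
  let κ : ℝ := r * b / 8
  let t : ℕ := ⌈2 / κ⌉₊
  let ε : ℝ := min (1 / 4) (Real.exp (-(5 / (κ / 2))))
  let δ : ℝ := ε / Fintype.card ι
  have hκ : 0 < κ := by positivity
  have hδ : 0 < δ := by positivity
  have ht : 2 ≤ κ * t := (div_le_iff₀' hκ).1 (Nat.le_ceil _)
  have ht₁ : (1 : ℝ) ≤ t := Nat.one_le_cast.2 (Nat.ceil_pos.2 (by positivity))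
  have hblock {u : ℝ} (hu : u ≤ t) : ∀ᶠ n in atTop, ∀ i, 2 * (κ * meanDegree ν n) ≤
      (ν n).real {some i} * (#{v | lab n v = some i} - u) / 2 := by
    filter_upwards [hlab, (tendsto_natCast_atTop_atTop.const_mul_atTop
      (half_pos hb)).eventually_ge_atTop (t : ℝ)] with n hn htn i
    calc 2 * (κ * meanDegree ν n) = r * (ν n).real {none}ᶜ * (b / 2 * n) / 2 := by
          simp only [κ, meanDegree]; ring
      _ ≤ (ν n).real {some i} * (#{v | lab n v = some i} - u) / 2 := by
        gcongr
        · exact hν n i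
        · linarith [hn i]
  have hspread := withHighProbability_isColorSpread hd hr hν hδ
  have hsparse := withHighProbability_isLocallySparse hd (half_pos hκ) (min_le_right _ _ : ε ≤ _)
  have hhall := withHighProbability_hasNoTightHallViolator hd (min_le_left _ _ : ε ≤ _)
  have hvertices := withHighProbability_hasFewDeficientVertices hd hκ hx
    (by simpa using hblock t.cast_nonneg)
  have hneighbors := withHighProbability_hasFewDeficientNeighbors hd ht (hblock ht₁)
  have hpaths := withHighProbability_hasFewDeficientPaths hd ht (hblock le_rfl)
  refine ⟨δ, hδ, κ, hκ, t, (hspread.and <| hsparse.and <| hhall.and <| hvertices.and <|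
    hneighbors.and hpaths).mono <| .of_forall fun n f h => ?_⟩
  have hscale : Fintype.card ι * (δ * n) = ε * n := by simp only [δ]; field_simp
  exact ⟨h.1, by rw [hscale, mul_div_right_comm]; exact h.2.1, by rw [hscale]; exact h.2.2.1,
    h.2.2.2.1, h.2.2.2.2.1, h.2.2.2.2.2⟩

theorem withHighProbability_exists_perfect_matching_with_profile [Fintype ι] [Nonempty ι]
    [DecidableEq ι] {r β : ℝ} (hr : 0 < r)
    (hν : ∀ n i, r * (ν n).real {none}ᶜ ≤ (ν n).real {some i}) (hβ : 0 < β) :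
    WithHighProbability (randomBipartite ν) fun n f =>
      ∀ m : ι → ℕ, ∑ i, m i = n → (∀ i, β * n ≤ m i) →
        ∃ σ : Equiv.Perm (Fin n), (∀ a, f (a, σ a) ≠ none) ∧
          ∀ i, #{a | f (a, σ a) = some i} = m i := by
  wlog hβι : Fintype.card ι * β ≤ 1 generalizing β
  · have hcard : (0 : ℝ) < Fintype.card ι := mod_cast Fintype.card_pos
    have hβ' : (Fintype.card ι : ℝ)⁻¹ ≤ β := (inv_le_iff_one_le_mul₀' hcard).2 (not_le.1 hβι).le
    exact (this (inv_pos.2 hcard) (mul_inv_cancel₀ hcard.ne').le).mono <| .of_forall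
      fun n f h m hm hmβ => h m hm fun i => (hmβ i).trans' (by gcongr)
  obtain ⟨lab, hlab_le, hlab_ge⟩ :=
    exists_labelling_linear_card (ι := ι) (half_pos hβ) (by linarith)
  obtain ⟨δ, hδ, κ, hκ, t, hpseudo⟩ := exists_withHighProbability_isPseudorandom hd hr hν
    (half_pos (half_pos hβ)) (div_pos hβ four_pos) hlab_ge
  have hlarge := ((tendsto_atTop_of_tendsto_sub_log hd).const_mul_atTop hκ).eventually_ge_atTop
    (4 * Fintype.card ι * t : ℝ)
  refine (hpseudo.and hpseudo.swap).mono (hlarge.mono fun n hn f hf m hm hmβ => ?_)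
  refine hf.1.exists_perfect_matching_with_profile (by positivity) hn rfl hf.2
    (hm.trans (Fintype.card_fin n).symm) fun i => ?_
  linarith [hlab_le n i, hmβ i]

end RandomBipartite

section ColorMeasure

variable {q : ℕ} {α : Fin q → ℝ} {p : ℝ}

lemma colorM_real_none (hp : p ≤ 1) : (colorM q α p).real {none} = 1 - p := by
  simp [colorM, measureReal_def, hp]

lemma colorM_real_some {i : Fin q} (hα : 0 ≤ α i) (hp : 0 ≤ p) :
    (colorM q α p).real {some i} = α i * p := by
  have hdirac (j : Fin q) : Measure.dirac (some j) {some i} = if i = j then 1 else 0 := by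
    simp [Set.indicator_apply, eq_comm]
  simp [colorM, measureReal_def, hdirac, mul_nonneg hα hp]

lemma isProbabilityMeasure_colorM (hα : ∀ i, 0 ≤ α i) (hsum : ∑ i, α i = 1) (hp : 0 ≤ p)
    (hp₁ : p ≤ 1) : IsProbabilityMeasure (colorM q α p) where
  measure_univ := by
    simp only [colorM, Measure.coe_add, Measure.coe_smul, Pi.add_apply, Pi.smul_apply,
      Measure.coe_finsetSum, Finset.sum_apply, measure_univ, smul_eq_mul, mul_one]
    rw [← ENNReal.ofReal_sum_of_nonneg fun i _ => mul_nonneg (hα i) hp, ← Finset.sum_mul, hsum,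
      one_mul, ← ENNReal.ofReal_add (sub_nonneg.2 hp₁) hp, sub_add_cancel, ENNReal.ofReal_one]

lemma colorM_real_compl_none (hα : ∀ i, 0 ≤ α i) (hsum : ∑ i, α i = 1) (hp : 0 ≤ p)
    (hp₁ : p ≤ 1) : (colorM q α p).real {none}ᶜ = p := by
  have := isProbabilityMeasure_colorM hα hsum hp hp₁
  rw [probReal_compl_eq_one_sub (measurableSet_singleton _), colorM_real_none hp₁, sub_sub_cancel]

end ColorMeasure

theorem matching_color_profile_general {q : ℕ} {α : Fin q → ℝ} (hα : ∀ i, 0 < α i)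
    (hsum : ∑ i, α i = 1) {β : ℝ} (hβ : 0 < β) {p : ℕ → ℝ} (hp : ∀ᶠ n in atTop, p n ≤ 1)
    (hd : Tendsto (fun n : ℕ => n * p n - Real.log n) atTop atTop) :
    Tendsto (fun n =>
      graphM n q α (p n)
        {f | ∀ m : Fin q → ℕ, (∑ i, m i) = n → (∀ i, β * n ≤ (m i : ℝ)) →
          ∃ σ : Equiv.Perm (Fin n), (∀ a, f (a, σ a) ≠ none) ∧
            ∀ i, (univ.filter fun a => f (a, σ a) = some i).card = m i})
      atTop (nhds 1) := by
  have hp_nonneg : ∀ᶠ n in atTop, 0 ≤ p n := by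
    filter_upwards [(tendsto_atTop_of_tendsto_sub_log hd).eventually_gt_atTop 0] with n hn
    exact (pos_of_mul_pos_right hn n.cast_nonneg).le
  wlog hp01 : ∀ n, p n ∈ Set.Icc 0 1 generalizing p
  · have hproj : ∀ᶠ n in atTop, (Set.projIcc 0 1 zero_le_one (p n) : ℝ) = p n := by
      filter_upwards [hp_nonneg, hp] with n hn hn'
      rw [Set.projIcc_of_mem zero_le_one ⟨hn, hn'⟩]
    have hmem (n : ℕ) := (Set.projIcc (0 : ℝ) 1 zero_le_one (p n)).2
    refine (this (.of_forall fun n => (hmem n).2) (hd.congr' ?_) (.of_forall fun n => (hmem n).1)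
      hmem).congr' ?_
    all_goals exact hproj.mono fun n hn => by simp only [hn]
  have (n : ℕ) := isProbabilityMeasure_colorM (fun i => (hα i).le) hsum (hp01 n).1 (hp01 n).2
  have hnone (n : ℕ) := colorM_real_compl_none (fun i => (hα i).le) hsum (hp01 n).1 (hp01 n).2
  have : Nonempty (Fin q) := (univ_nonempty_iff.1 <| nonempty_of_sum_ne_zero (hsum ▸ one_ne_zero))
  obtain ⟨i₀, hi₀⟩ := Finite.exists_min α
  refine (withHighProbability_exists_perfect_matching_with_profile
    (ν := fun n => colorM q α (p n)) (by simpa only [meanDegree, hnone] using hd) (hα i₀)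
    (fun n i => ?_) hβ).tendsto_measure
  rw [hnone, colorM_real_some (hα i).le (hp01 n).1]
  exact mul_le_mul_of_nonneg_right (hi₀ i) (hp01 n).1

lemma eventually_log_add_div_le_one {w : ℕ → ℝ} (hw : w =o[atTop] fun n : ℕ => Real.log n) :
    ∀ᶠ n : ℕ in atTop, (Real.log n + w n) / n ≤ 1 := by
  have hlog : (fun n : ℕ => Real.log n) =o[atTop] fun n : ℕ => (n : ℝ) :=
    Real.isLittleO_log_id_atTop.comp_tendsto tendsto_natCast_atTop_atTop
  exact (hlog.add (hw.trans hlog)).tendsto_div_nhds_zero.eventually_le_const one_pos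

/-- w.h.p. every vector `(m₁,…,m_q)` with `∑ mᵢ = n` and `mᵢ ≥ βn` lies in the
perfect matching color profile.  A perfect matching is encoded by a permutation `σ` with all
edges `(a, σ a)` present; `|M ∩ Qᵢ|` is the number of `a` with `f (a, σ a) = some i`. -/
theorem matching_color_profile (q : ℕ) (hq : 1 ≤ q) (α : Fin q → ℝ)
    (hα : ∀ i, 0 < α i) (hsum : ∑ i, α i = 1)
    (β : ℝ) (hβ : 0 < β) (hβq : β < 1 / q)
    (w : ℕ → ℝ) (hw : Tendsto w atTop atTop)
    (hwo : w =o[atTop] fun n => Real.log n) :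
    Tendsto (fun n =>
      graphM n q α ((Real.log n + w n) / n)
        {f | ∀ m : Fin q → ℕ, (∑ i, m i) = n → (∀ i, β * n ≤ (m i : ℝ)) →
          ∃ σ : Equiv.Perm (Fin n), (∀ a, f (a, σ a) ≠ none) ∧
            ∀ i, (univ.filter fun a => f (a, σ a) = some i).card = m i})
      atTop (nhds 1) := by
  refine matching_color_profile_general hα hsum hβ (eventually_log_add_div_le_one hwo)
    (hw.congr' ?_)
  filter_upwards [eventually_ne_atTop 0] with n hn
  rw [mul_div_cancel₀ _ (Nat.cast_ne_zero.2 hn), add_sub_cancel_left]
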